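/- arXiv:1103.0203 — 2 statements merged into one kernel-verified Lean document; each statement's English description precedes it below -/
import Mathlib

section
/- Let n ≥ 1, d ≥ 3, and m = ⌈d/2⌉. Assume r ≤ binom(n+m,n) − n − 1 if d is even, and r ≤ binom(n+m−1,n) if d is odd. Then for a general tuple (v_1,…,v_r) ∈ (ℂ^{n+1})^r, setting f = Σ_{i=1}^r v_i^d and Z = {v_1,…,v_r}: (a) ker C_f^m = I_{Z,m}; (b) a nonzero w ∈ ℂ^{n+1} satisfies p(w) = 0 for every p ∈ I_{Z,m} if and only if w is a scalar multiple of some v_i (i.e., the common projective zero set of I_{Z,m} is exactly {[v_1],…,[v_r]}); (c) f has symmetric rank r and its rank-r Waring decomposition is unique up to permutation and scaling. -/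
open MvPolynomial

/-- The linear form `ℓ_v = Σ_j v_j x_j` associated to a vector `v ∈ ℂ^k`. -/
noncomputable def linForm (k : ℕ) (v : Fin k → ℂ) : MvPolynomial (Fin k) ℂ :=
  ∑ j, MvPolynomial.C (v j) * MvPolynomial.X j

/-- `diffOp p f = p(∂/∂x_0, …, ∂/∂x_{k-1})(f)`: the constant-coefficient differential
operator associated to `p`, applied to `f`.  For `p` homogeneous of degree `m` this is
the catalecticant `C_f^m` applied to `p`. -/
noncomputable def diffOp {k : ℕ} (p f : MvPolynomial (Fin k) ℂ) : MvPolynomial (Fin k) ℂ :=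
  ∑ μ ∈ p.support, p.coeff μ •
    (((μ.support.sort (· ≤ ·)).map fun i =>
        ((MvPolynomial.pderiv i).toLinearMap :
          Module.End ℂ (MvPolynomial (Fin k) ℂ)) ^ (μ i)).prod f)

/-- The (symmetric/Waring) rank of `f`: the least `r` such that
`f = Σ_{i=1}^r c_i ℓ_{v_i}^d` with all `v_i ≠ 0`. -/
noncomputable def waringRank (n d : ℕ) (f : MvPolynomial (Fin (n+1)) ℂ) : ℕ :=
  sInf {r : ℕ | ∃ (c : Fin r → ℂ) (v : Fin r → (Fin (n+1) → ℂ)),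
    (∀ i, v i ≠ 0) ∧ f = ∑ i, c i • (linForm (n+1) (v i)) ^ d}

/-- The rank-`r` decomposition `f = Σ c_i ℓ_{v_i}^d` is unique up to permutation and
scaling: every decomposition `f = Σ c_i' ℓ_{w_i}^d` with all `c_i' ≠ 0`, `w_i ≠ 0` is
obtained from it by a permutation `σ` and nonzero scalars `λ_i` with `w_i = λ_i v_{σ i}`
and `c_i' λ_i^d = c_{σ i}`. -/
def UniqueDecomp (n d r : ℕ) (f : MvPolynomial (Fin (n+1)) ℂ)
    (c : Fin r → ℂ) (v : Fin r → Fin (n+1) → ℂ) : Prop :=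
  ∀ (c' : Fin r → ℂ) (w : Fin r → Fin (n+1) → ℂ),
    (∀ i, c' i ≠ 0) → (∀ i, w i ≠ 0) →
    f = ∑ i, c' i • (linForm (n+1) (w i)) ^ d →
    ∃ (σ : Equiv.Perm (Fin r)) (lam : Fin r → ℂ),
      (∀ i, lam i ≠ 0) ∧ (∀ i, w i = lam i • v (σ i)) ∧ (∀ i, c' i * lam i ^ d = c (σ i))

/-!
By apolarity, a form `p` of degree `m` sends `f = ∑ v_i^d` to a multiple of `∑ p(v_i) v_i^(d-m)`, so
as soon as the `v_i` impose independent conditions on forms of degree `d - m`, the kernel of the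
catalecticant is `I_{Z,m}`. For another decomposition of `f`, on points `W`, this gives
`I_{W,m} ⊆ I_{Z,m}`. If `Z` also imposes independent conditions in degree `m`, then `W` has at least
as many points as `Z`; in case of equality `I_{W,m} = I_{Z,m}`, and if moreover `I_{Z,m}` cuts out
`Z`, then `W` is `Z` up to scaling.

A tuple imposing independent conditions in degree `s` is cut out in degree `s + 1`. For odd
`d = 2s + 1` and `m = s + 1` this is all that is needed. For even `d = 2m` one asks in addition that
`I_{Z,m}` generates `I_{Z,m+t}` for some large `t`, since `Z` is cut out in degree `m + t`.

Imposing independent conditions is a Zariski-open condition because dual forms can be lifted to the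
universal tuple by means of an adjugate matrix, and generation is one by Nakayama's lemma over the
coordinate ring of the universal tuple. It remains to exhibit one tuple of each kind: lattice points
of the simplex `|a| ≤ s` for odd `d`, and for even `d` lattice points of the simplex `|a| ≤ m` other
than its vertices, where the Combinatorial Nullstellensatz yields the generation.
-/

section FormsAtPoints

variable {σ ι κ R : Type*}

section CommSemiring

variable [CommSemiring R] {s t : ℕ} {v : ι → σ → R}

/-- Evaluation of forms of degree `s` at the vectors of a tuple. -/
noncomputable def evalForms (s : ℕ) (v : ι → σ → R) :
    homogeneousSubmodule σ R s →ₗ[R] ι → R :=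
  LinearMap.pi fun i => (aeval (v i)).toLinearMap ∘ₗ (homogeneousSubmodule σ R s).subtype

@[simp]
lemma evalForms_apply (p : homogeneousSubmodule σ R s) (i : ι) :
    evalForms s v p i = eval (v i) (p : MvPolynomial σ R) := by
  simp [evalForms, aeval_eq_eval]

/-- The space `I_{Z,s}` of forms of degree `s` vanishing at every vector of the tuple `Z = v`. -/
noncomputable def vanishingForms (s : ℕ) (v : ι → σ → R) : Submodule R (MvPolynomial σ R) :=
  (LinearMap.ker (evalForms s v)).map (homogeneousSubmodule σ R s).subtype

lemma mem_vanishingForms {p : MvPolynomial σ R} :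
    p ∈ vanishingForms s v ↔ p.IsHomogeneous s ∧ ∀ i, eval (v i) p = 0 := by
  simp [vanishingForms, funext_iff, and_comm]

lemma vanishingForms_le_homogeneousSubmodule :
    vanishingForms s v ≤ homogeneousSubmodule σ R s :=
  Submodule.map_subtype_le _ _

lemma vanishingForms_le_comp (a : κ → ι) : vanishingForms s v ≤ vanishingForms s (v ∘ a) :=
  fun _ hp => mem_vanishingForms.2
    ⟨(mem_vanishingForms.1 hp).1, fun i => (mem_vanishingForms.1 hp).2 (a i)⟩

lemma homogeneousSubmodule_mul_vanishingForms_le :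
    homogeneousSubmodule σ R t * vanishingForms s v ≤ vanishingForms (s + t) v := by
  refine Submodule.mul_le.2 fun q hq p hp => mem_vanishingForms.2 ⟨?_, fun i => ?_⟩
  · exact add_comm t s ▸ IsHomogeneous.mul hq (mem_vanishingForms.1 hp).1
  · rw [map_mul, (mem_vanishingForms.1 hp).2 i, mul_zero]

lemma ker_evalForms_le_iff {w : κ → σ → R} :
    LinearMap.ker (evalForms s w) ≤ LinearMap.ker (evalForms s v) ↔
      vanishingForms s w ≤ vanishingForms s v :=
  (Submodule.map_le_map_iff_of_injective (Submodule.injective_subtype _) _ _).symm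

/-- The vectors of the tuple `v` impose independent conditions on forms of degree `s`: every
family of values is taken by such a form. -/
def Interpolates (s : ℕ) (v : ι → σ → R) : Prop :=
  Function.Surjective (evalForms s v)

lemma interpolates_iff :
    Interpolates s v ↔ ∀ c : ι → R, ∃ p, p.IsHomogeneous s ∧ ∀ i, eval (v i) p = c i := by
  simp [Interpolates, Function.Surjective, funext_iff]

/-- The vectors of the tuple `v` are, up to scaling, the only common zeros of the forms of degree
`m` vanishing on them. -/
def IsCutOutInDegree (m : ℕ) (v : ι → σ → R) : Prop :=
  ∀ w ≠ 0, (∀ p ∈ vanishingForms m v, eval w p = 0) → ∃ i, ∃ c : R, w = c • v i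

/-- The forms of degree `m + t` vanishing on the tuple `v` are combinations, with forms of degree
`t` as coefficients, of the forms of degree `m` vanishing on it. -/
def VanishingGenerated (m t : ℕ) (v : ι → σ → R) : Prop :=
  vanishingForms (m + t) v ≤ homogeneousSubmodule σ R t * vanishingForms m v

lemma VanishingGenerated.isCutOutInDegree {m : ℕ} (h : VanishingGenerated m t v)
    (hcut : IsCutOutInDegree (m + t) v) : IsCutOutInDegree m v := by
  refine fun w hw hzero => hcut w hw fun p hp => ?_
  refine Submodule.mul_induction_on (C := fun q => eval w q = 0) (h hp) ?_ ?_
  · intro q _ g hg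
    rw [map_mul, hzero g hg, mul_zero]
  · intro q q' hq hq'
    rw [map_add, hq, hq', add_zero]

lemma eval_smul_of_isHomogeneous {p : MvPolynomial σ R} (hp : p.IsHomogeneous s) (c : R)
    (w : σ → R) : eval (c • w) p = c ^ s * eval w p := by
  rw [eval_eq, eval_eq, Finset.mul_sum]
  refine Finset.sum_congr rfl fun μ hμ => ?_
  rw [hp.degree_eq_sum_deg_support hμ, ← Finset.prod_pow_eq_pow_sum]
  simp only [Pi.smul_apply, smul_eq_mul, mul_pow, Finset.prod_mul_distrib]
  ring

namespace Interpolates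

lemma comp (h : Interpolates s v) {a : κ → ι} (ha : Function.Injective a) :
    Interpolates s (v ∘ a) := by
  refine interpolates_iff.2 fun c => ?_
  obtain ⟨p, hp, hpv⟩ := interpolates_iff.1 h (Function.extend a c 0)
  exact ⟨p, hp, fun i => by rw [Function.comp_apply, hpv, ha.extend_apply]⟩

lemma add (hs : Interpolates s v) (ht : Interpolates t v) : Interpolates (s + t) v := by
  refine interpolates_iff.2 fun c => ?_
  obtain ⟨p, hp, hpv⟩ := interpolates_iff.1 hs c
  obtain ⟨q, hq, hqv⟩ := interpolates_iff.1 ht 1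
  exact ⟨p * q, hp.mul hq, fun i => by simp [hpv, hqv]⟩

lemma ne_zero [Nontrivial R] (h : Interpolates s v) (hs : s ≠ 0) (i : ι) : v i ≠ 0 := by
  intro hi
  obtain ⟨p, hp, hpv⟩ := interpolates_iff.1 h 1
  have hzero : eval ((0 : R) • v i) p = 0 := by
    rw [eval_smul_of_isHomogeneous hp, zero_pow hs, zero_mul]
  have hone : eval (v i) p = 1 := hpv i
  rw [zero_smul, ← hi, hone] at hzero
  exact one_ne_zero hzero

lemma eq_of_eq_smul [NoZeroDivisors R] [Nontrivial R] (h : Interpolates s v) {u : σ → R} {i j : ι}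
    {b c : R} (hi : v i = b • u) (hj : v j = c • u) (hc : c ≠ 0) : i = j := by
  classical
  by_contra hij
  obtain ⟨p, hp, hpv⟩ := interpolates_iff.1 h (Pi.single i 1)
  have hpi : b ^ s * eval u p = 1 := by
    rw [← eval_smul_of_isHomogeneous hp, ← hi, hpv, Pi.single_eq_same]
  have hpj : c ^ s * eval u p = 0 := by
    rw [← eval_smul_of_isHomogeneous hp, ← hj, hpv, Pi.single_eq_of_ne' hij]
  rw [(mul_eq_zero.1 hpj).resolve_left (pow_ne_zero s hc), mul_zero] at hpi
  exact zero_ne_one hpi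

end Interpolates

lemma IsCutOutInDegree.exists_perm [NoZeroDivisors R] [Nontrivial R] [Finite ι] {w : ι → σ → R}
    (hcut : IsCutOutInDegree s v) (hle : vanishingForms s v ≤ vanishingForms s w)
    (hint : Interpolates s w) (hw : ∀ j, w j ≠ 0) :
    ∃ (π : Equiv.Perm ι) (lam : ι → R), (∀ j, lam j ≠ 0) ∧ ∀ j, w j = lam j • v (π j) := by
  choose π lam hlam using fun j =>
    hcut (w j) (hw j) fun p hp => (mem_vanishingForms.1 (hle hp)).2 j
  have hlam0 (j : ι) : lam j ≠ 0 := fun h => hw j (by rw [hlam, h, zero_smul])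
  have hπ : Function.Injective π := fun j l hjl =>
    hint.eq_of_eq_smul (hlam j) (hjl ▸ hlam l) (hlam0 l)
  exact ⟨Equiv.ofBijective π (Finite.injective_iff_bijective.1 hπ), lam, hlam0, hlam⟩

/-- The forms `e i` of degree `s` are dual to the vectors `v j` up to the common factor `D`. Over
a field one can take `D = 1`; the factor is there for tuples over a polynomial ring. -/
structure DualForms (s : ℕ) (v : ι → σ → R) (D : R) (e : ι → MvPolynomial σ R) : Prop where
  isHomogeneous (i : ι) : (e i).IsHomogeneous s
  eval_self (i : ι) : eval (v i) (e i) = D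
  eval_of_ne {i j : ι} (hij : i ≠ j) : eval (v j) (e i) = 0

lemma Interpolates.exists_dualForms (h : Interpolates s v) : ∃ e, DualForms s v 1 e := by
  classical
  choose e he hev using fun i => interpolates_iff.1 h (Pi.single i 1)
  exact ⟨e, he, fun i => by rw [hev, Pi.single_eq_same],
    fun hij => by rw [hev, Pi.single_eq_of_ne' hij]⟩

namespace DualForms

variable {D : R} {e : ι → MvPolynomial σ R}

lemma isHomogeneous_sum_smul [Fintype ι] (h : DualForms s v D e) (c : ι → R) :
    (∑ i, c i • e i).IsHomogeneous s :=
  Submodule.sum_smul_mem (homogeneousSubmodule σ R s) c fun i _ => h.isHomogeneous i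

lemma eval_sum_smul [Fintype ι] (h : DualForms s v D e) (c : ι → R) (j : ι) :
    eval (v j) (∑ i, c i • e i) = c j * D := by
  simp only [map_sum, smul_eval]
  rw [Finset.sum_eq_single j (fun i _ hij => by rw [h.eval_of_ne hij, mul_zero]) (by simp),
    h.eval_self]

lemma interpolates [Finite ι] (h : DualForms s v D e) (hD : IsUnit D) : Interpolates s v := by
  have := Fintype.ofFinite ι
  obtain ⟨u, rfl⟩ := hD
  refine interpolates_iff.2 fun c => ⟨_, h.isHomogeneous_sum_smul fun i => c i * ↑u⁻¹, fun i => ?_⟩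
  rw [h.eval_sum_smul, Units.inv_mul_cancel_right]

end DualForms

end CommSemiring

section Remainder

variable [CommRing R] [Fintype ι] {s : ℕ} {v : ι → σ → R} {D : R} {e : ι → MvPolynomial σ R}

/-- The remainder of interpolating `D • p` at the vectors `v i` by the forms `e i`. -/
noncomputable def interpolationRemainder (v : ι → σ → R) (D : R) (e : ι → MvPolynomial σ R) :
    MvPolynomial σ R →ₗ[R] MvPolynomial σ R :=
  D • LinearMap.id - ∑ i, (aeval (v i)).toLinearMap.smulRight (e i)

lemma interpolationRemainder_apply (p : MvPolynomial σ R) :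
    interpolationRemainder v D e p = D • p - ∑ i, eval (v i) p • e i := by
  simp [interpolationRemainder, aeval_eq_eval]

lemma interpolationRemainder_eq_smul {p : MvPolynomial σ R} (hp : ∀ i, eval (v i) p = 0) :
    interpolationRemainder v D e p = D • p := by
  simp [interpolationRemainder_apply, hp]

lemma DualForms.remainder_mem_vanishingForms (h : DualForms s v D e) {p : MvPolynomial σ R}
    (hp : p.IsHomogeneous s) : interpolationRemainder v D e p ∈ vanishingForms s v := by
  rw [interpolationRemainder_apply, mem_vanishingForms]
  refine ⟨((homogeneousSubmodule σ R s).smul_mem D hp).sub (h.isHomogeneous_sum_smul _),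
    fun i => ?_⟩
  rw [map_sub, h.eval_sum_smul, smul_eval, mul_comm, sub_self]

end Remainder

section Field

variable [Field R] {s t : ℕ} {v : ι → σ → R}

lemma exists_isHomogeneous_eval_eq_one {w : σ → R} (hw : w ≠ 0) (t : ℕ) :
    ∃ l : MvPolynomial σ R, l.IsHomogeneous t ∧ eval w l = 1 := by
  obtain ⟨j, hj⟩ := Function.ne_iff.1 hw
  refine ⟨(C (w j)⁻¹ * X j) ^ t, ?_, ?_⟩
  · simpa using (isHomogeneous_C_mul_X (w j)⁻¹ j).pow t
  · simp [inv_mul_cancel₀ (show w j ≠ 0 from hj)]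

lemma exists_linear_form_separating {u w : σ → R} (hu : u ≠ 0) (h : ∀ c : R, w ≠ c • u) :
    ∃ l : MvPolynomial σ R, l.IsHomogeneous 1 ∧ eval u l = 0 ∧ eval w l ≠ 0 := by
  obtain ⟨i, hi⟩ := Function.ne_iff.1 hu
  obtain ⟨j, hj⟩ := Function.ne_iff.1 (h (w i / u i))
  refine ⟨C (u i) * X j - C (u j) * X i,
    (isHomogeneous_C_mul_X _ _).sub (isHomogeneous_C_mul_X _ _), by simp [mul_comm], ?_⟩
  contrapose! hj
  simp only [map_sub, map_mul, eval_C, eval_X, sub_eq_zero] at hj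
  rw [Pi.smul_apply, smul_eq_mul, div_mul_eq_mul_div, eq_div_iff hi]
  linear_combination hj

lemma DualForms.exists_mul {D : R} {e : ι → MvPolynomial σ R} (he : DualForms s v D e)
    (hv : ∀ i, v i ≠ 0) (t : ℕ) : ∃ l : ι → MvPolynomial σ R,
      (∀ i, (l i).IsHomogeneous t) ∧ DualForms (s + t) v D fun i => l i * e i := by
  choose l hl hlv using fun i => exists_isHomogeneous_eval_eq_one (hv i) t
  exact ⟨l, hl, fun i => add_comm t s ▸ (hl i).mul (he.isHomogeneous i),
    fun i => by rw [map_mul, he.eval_self, hlv, one_mul],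
    fun hij => by rw [map_mul, he.eval_of_ne hij, mul_zero]⟩

lemma interpolates_of_forall_exists [Finite ι] (h : ∀ i, ∃ e : MvPolynomial σ R,
    e.IsHomogeneous s ∧ eval (v i) e ≠ 0 ∧ ∀ j ≠ i, eval (v j) e = 0) : Interpolates s v := by
  choose e he hself hne using h
  exact DualForms.interpolates (D := 1) (e := fun i => (eval (v i) (e i))⁻¹ • e i)
    ⟨fun i => (homogeneousSubmodule σ R s).smul_mem _ (he i),
      fun i => by rw [smul_eval, inv_mul_cancel₀ (hself i)],
      fun hij => by rw [smul_eval, hne _ _ hij.symm, mul_zero]⟩ isUnit_one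

namespace Interpolates

lemma exists_sub_mul_mem_vanishingForms {m : ℕ} (ht : Interpolates t v)
    {h p : MvPolynomial σ R} (hh : h.IsHomogeneous m) (hp : p.IsHomogeneous (m + t))
    (hzero : ∀ i, eval (v i) h = 0 → eval (v i) p = 0) :
    ∃ q, q.IsHomogeneous t ∧ p - q * h ∈ vanishingForms (m + t) v := by
  obtain ⟨q, hq, hqv⟩ := interpolates_iff.1 ht fun i => eval (v i) p / eval (v i) h
  refine ⟨q, hq, mem_vanishingForms.2 ⟨hp.sub (add_comm t m ▸ hq.mul hh), fun i => ?_⟩⟩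
  rw [map_sub, map_mul, hqv, div_mul_cancel_of_imp (hzero i), sub_self]

lemma add_right [Finite ι] (h : Interpolates s v) (hv : ∀ i, v i ≠ 0) (t : ℕ) :
    Interpolates (s + t) v := by
  obtain ⟨e, he⟩ := h.exists_dualForms
  obtain ⟨l, -, hle⟩ := he.exists_mul hv t
  exact hle.interpolates isUnit_one

/-- A further common zero `w` would be a zero of the dual forms `e i`, since `e i * l` vanishes on
the tuple for each linear form `l` vanishing at `v i`. But any form of degree `s` differs from a
combination of the `e i` by a form vanishing on the tuple. -/
lemma isCutOutInDegree_succ [Finite ι] (h : Interpolates s v) (hv : ∀ i, v i ≠ 0) :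
    IsCutOutInDegree (s + 1) v := by
  have := Fintype.ofFinite ι
  intro w hw hzero
  by_contra! hcon
  obtain ⟨e, he⟩ := h.exists_dualForms
  have hew (i : ι) : eval w (e i) = 0 := by
    obtain ⟨l, hl, hlv, hlw⟩ := exists_linear_form_separating (hv i) (hcon i)
    have hmem : e i * l ∈ vanishingForms (s + 1) v := by
      refine mem_vanishingForms.2 ⟨(he.isHomogeneous i).mul hl, fun j => ?_⟩
      obtain rfl | hij := eq_or_ne i j
      · rw [map_mul, hlv, mul_zero]
      · rw [map_mul, he.eval_of_ne hij, zero_mul]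
    simpa [hlw] using hzero _ hmem
  obtain ⟨q, hq, hqw⟩ := exists_isHomogeneous_eval_eq_one hw s
  obtain ⟨l, hl, hlw⟩ := exists_isHomogeneous_eval_eq_one hw 1
  have hres : interpolationRemainder v 1 e q * l ∈ vanishingForms (s + 1) v := by
    rw [mul_comm]
    exact homogeneousSubmodule_mul_vanishingForms_le
      (Submodule.mul_mem_mul hl (he.remainder_mem_vanishingForms hq))
  simpa [interpolationRemainder_apply, hew, hqw, hlw, smul_eval] using hzero _ hres

end Interpolates

lemma VanishingGenerated.comp [Finite ι] {m : ℕ} (h : VanishingGenerated m t v)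
    (hv : Interpolates m v) (hv0 : ∀ i, v i ≠ 0) (a : κ → ι) : VanishingGenerated m t (v ∘ a) := by
  have := Fintype.ofFinite ι
  intro p hp
  obtain ⟨hp, hpa⟩ := mem_vanishingForms.1 hp
  obtain ⟨e, he⟩ := hv.exists_dualForms
  obtain ⟨l, hl, hle⟩ := he.exists_mul hv0 t
  have hres : interpolationRemainder v 1 (fun i => l i * e i) p ∈
      homogeneousSubmodule σ R t * vanishingForms m (v ∘ a) :=
    mul_le_mul_right (vanishingForms_le_comp a) _ (h (hle.remainder_mem_vanishingForms hp))
  have hsum : ∑ i, eval (v i) p • (l i * e i) ∈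
      homogeneousSubmodule σ R t * vanishingForms m (v ∘ a) := by
    refine Submodule.sum_mem _ fun i _ => ?_
    by_cases hi : i ∈ Set.range a
    · obtain ⟨j, rfl⟩ := hi
      rw [show eval (v (a j)) p = 0 from hpa j, zero_smul]
      exact Submodule.zero_mem _
    · refine Submodule.smul_mem _ _ (Submodule.mul_mem_mul (hl i) (mem_vanishingForms.2
        ⟨he.isHomogeneous i, fun j => he.eval_of_ne fun hij => hi ⟨j, hij.symm⟩⟩))
  simpa [interpolationRemainder_apply] using Submodule.add_mem _ hres hsum

end Field

end FormsAtPoints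

section KernelComparison

variable {K M A B : Type*} [DivisionRing K] [AddCommGroup M] [Module K M] [AddCommGroup A]
  [Module K A] [AddCommGroup B] [Module K B] {f : M →ₗ[K] A} {g : M →ₗ[K] B}

lemma exists_rightInverse_comp_injective_of_ker_le (hf : Function.Surjective f)
    (hker : LinearMap.ker g ≤ LinearMap.ker f) :
    ∃ u : A →ₗ[K] M, f ∘ₗ u = LinearMap.id ∧ Function.Injective (g ∘ₗ u) := by
  obtain ⟨u, hu⟩ := f.exists_rightInverse_of_surjective (LinearMap.range_eq_top.2 hf)
  refine ⟨u, hu, LinearMap.ker_eq_bot.1 (LinearMap.ker_eq_bot'.2 fun a ha => ?_)⟩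
  calc a = f (u a) := (LinearMap.congr_fun hu a).symm
    _ = 0 := hker ha

variable [FiniteDimensional K B]

lemma finrank_le_of_surjective_of_ker_le (hf : Function.Surjective f)
    (hker : LinearMap.ker g ≤ LinearMap.ker f) : Module.finrank K A ≤ Module.finrank K B := by
  obtain ⟨u, -, hu⟩ := exists_rightInverse_comp_injective_of_ker_le hf hker
  exact LinearMap.finrank_le_finrank_of_injective hu

lemma surjective_and_ker_le_of_finrank_eq [FiniteDimensional K A] (hf : Function.Surjective f)
    (hker : LinearMap.ker g ≤ LinearMap.ker f) (h : Module.finrank K A = Module.finrank K B) :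
    Function.Surjective g ∧ LinearMap.ker f ≤ LinearMap.ker g := by
  obtain ⟨u, hfu, hgu⟩ := exists_rightInverse_comp_injective_of_ker_le hf hker
  have hsurj := (LinearMap.injective_iff_surjective_of_finrank_eq_finrank h).1 hgu
  refine ⟨Function.Surjective.of_comp (g := u) hsurj, fun x hx => ?_⟩
  obtain ⟨a, ha⟩ := hsurj (g x)
  have hfx : f (u a) = f x := by
    rw [← sub_eq_zero, ← map_sub]
    exact hker (by simpa [sub_eq_zero] using ha)
  have ha0 : a = 0 := (LinearMap.congr_fun hfu a).symm.trans (hfx.trans hx)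
  rw [LinearMap.mem_ker, ← ha, ha0, map_zero]

end KernelComparison

section Apolarity

variable {k : ℕ}

lemma linForm_smul (c : ℂ) (v : Fin k → ℂ) : linForm k (c • v) = c • linForm k v := by
  simp [linForm, Finset.smul_sum, smul_eq_C_mul, mul_assoc]

lemma pderiv_linForm (v : Fin k → ℂ) (i : Fin k) : pderiv i (linForm k v) = C (v i) := by
  simp [linForm, Derivation.leibniz, pderiv_X, Pi.single_apply]

lemma pderiv_pow_linForm_pow (v : Fin k → ℂ) (i : Fin k) (a d : ℕ) :
    (((pderiv i).toLinearMap : Module.End ℂ (MvPolynomial (Fin k) ℂ)) ^ a) (linForm k v ^ d) =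
      ((d.descFactorial a : ℂ) * v i ^ a) • linForm k v ^ (d - a) := by
  induction a with
  | zero => simp
  | succ a ih =>
    rw [pow_succ', Module.End.mul_apply, ih, map_smul, Derivation.coeFn_coe,
      Derivation.leibniz_pow, pderiv_linForm, Nat.descFactorial_succ, Nat.sub_sub]
    simp only [smul_eq_C_mul, nsmul_eq_mul, smul_eq_mul, C_mul, C_pow, Nat.cast_mul, map_natCast]
    ring

lemma list_prod_pderiv_pow_linForm_pow (v : Fin k → ℂ) (μ : Fin k → ℕ) (d : ℕ)
    (l : List (Fin k)) :
    ((l.map fun i => ((pderiv i).toLinearMap : Module.End ℂ (MvPolynomial (Fin k) ℂ)) ^ μ i).prod)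
        (linForm k v ^ d) =
      ((d.descFactorial (l.map μ).sum : ℂ) * (l.map fun i => v i ^ μ i).prod) •
        linForm k v ^ (d - (l.map μ).sum) := by
  induction l with
  | nil => simp
  | cons i l ih =>
    have h : d.descFactorial ((l.map μ).sum + μ i) =
        (d - (l.map μ).sum).descFactorial (μ i) * d.descFactorial (l.map μ).sum := by
      simpa using (Nat.descFactorial_mul_descFactorial (n := d)
        (Nat.le_add_right (l.map μ).sum (μ i))).symm
    simp only [List.map_cons, List.prod_cons, List.sum_cons, Module.End.mul_apply, ih, map_smul,
      pderiv_pow_linForm_pow, smul_smul, h, Nat.sub_sub, add_comm (μ i)]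
    push_cast
    congr 1
    ring

lemma diffOp_linForm_pow {p : MvPolynomial (Fin k) ℂ} {m : ℕ} (hp : p.IsHomogeneous m)
    (v : Fin k → ℂ) (d : ℕ) :
    diffOp p (linForm k v ^ d) =
      ((d.descFactorial m : ℂ) * eval v p) • linForm k v ^ (d - m) := by
  rw [diffOp, eval_eq, Finset.mul_sum, Finset.sum_smul]
  refine Finset.sum_congr rfl fun μ hμ => ?_
  have hsum : ((μ.support.sort (· ≤ ·)).map μ).sum = m := by
    rw [hp.degree_eq_sum_deg_support hμ, ← Multiset.sum_coe, ← Multiset.map_coe, Finset.sort_eq]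
    rfl
  have hprod : ((μ.support.sort (· ≤ ·)).map fun i => v i ^ μ i).prod =
      ∏ i ∈ μ.support, v i ^ μ i := by
    rw [← Multiset.prod_coe, ← Multiset.map_coe, Finset.sort_eq]
    rfl
  rw [list_prod_pderiv_pow_linForm_pow, hsum, hprod, smul_smul]
  congr 1
  ring

lemma diffOp_sum_smul {ι : Type*} [Fintype ι] (p : MvPolynomial (Fin k) ℂ) (c : ι → ℂ)
    (f : ι → MvPolynomial (Fin k) ℂ) :
    diffOp p (∑ i, c i • f i) = ∑ i, c i • diffOp p (f i) := by
  simp only [diffOp, map_sum, map_smul, Finset.smul_sum, smul_comm (c _)]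
  exact Finset.sum_comm

section Decompositions

variable {ι κ : Type*} [Fintype ι] {m d s : ℕ} {c : ι → ℂ} {v : ι → Fin k → ℂ}

lemma diffOp_sum_smul_linForm_pow {p : MvPolynomial (Fin k) ℂ} (hp : p.IsHomogeneous m)
    (c : ι → ℂ) (v : ι → Fin k → ℂ) (d : ℕ) :
    diffOp p (∑ i, c i • linForm k (v i) ^ d) =
      ∑ i, (d.descFactorial m * c i * eval (v i) p) • linForm k (v i) ^ (d - m) := by
  simp only [diffOp_sum_smul, diffOp_linForm_pow hp, smul_smul]
  exact Finset.sum_congr rfl fun i _ => by ring_nf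

lemma Interpolates.linearIndependent_linForm_pow {ι : Type*} [Finite ι]
    {v : ι → Fin k → ℂ} (h : Interpolates s v) :
    LinearIndependent ℂ fun i => linForm k (v i) ^ s := by
  have := Fintype.ofFinite ι
  obtain ⟨e, he⟩ := h.exists_dualForms
  refine Fintype.linearIndependent_iff.2 fun a ha j => ?_
  have hj : ∑ i, (s.descFactorial s * a i * eval (v i) (e j)) • linForm k (v i) ^ (s - s) = 0 := by
    rw [← diffOp_sum_smul_linForm_pow (he.isHomogeneous j), ha]
    simp [diffOp]
  rw [Finset.sum_eq_single j (fun i _ hij => by simp [he.eval_of_ne hij.symm]) (by simp),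
    he.eval_self] at hj
  simpa [Nat.descFactorial_self, Nat.factorial_ne_zero] using hj

lemma Interpolates.diffOp_eq_zero_iff (h : Interpolates (d - m) v) (hmd : m ≤ d)
    (hc : ∀ i, c i ≠ 0) {p : MvPolynomial (Fin k) ℂ} (hp : p.IsHomogeneous m) :
    diffOp p (∑ i, c i • linForm k (v i) ^ d) = 0 ↔ ∀ i, eval (v i) p = 0 := by
  have hfac : (d.descFactorial m : ℂ) ≠ 0 :=
    Nat.cast_ne_zero.2 (Nat.descFactorial_pos.2 hmd).ne'
  rw [diffOp_sum_smul_linForm_pow hp]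
  refine ⟨fun hzero i => ?_, fun hzero => by simp [hzero]⟩
  have hi := Fintype.linearIndependent_iff.1 h.linearIndependent_linForm_pow _ hzero i
  exact (mul_eq_zero.1 hi).resolve_left (mul_ne_zero hfac (hc i))

lemma Interpolates.vanishingForms_le_of_decomposition [Fintype κ] {c' : κ → ℂ}
    {w : κ → Fin k → ℂ} (h : Interpolates (d - m) v) (hmd : m ≤ d) (hc : ∀ i, c i ≠ 0)
    (hf : ∑ i, c i • linForm k (v i) ^ d = ∑ j, c' j • linForm k (w j) ^ d) :
    vanishingForms m w ≤ vanishingForms m v := by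
  intro p hp
  obtain ⟨hp, hpw⟩ := mem_vanishingForms.1 hp
  refine mem_vanishingForms.2 ⟨hp, (h.diffOp_eq_zero_iff hmd hc hp).1 ?_⟩
  rw [hf, diffOp_sum_smul_linForm_pow hp]
  simp [hpw]

end Decompositions

section WaringRank

variable {n r d m : ℕ} {c : Fin r → ℂ} {v : Fin r → Fin (n + 1) → ℂ}

lemma waringRank_sum_smul_linForm_pow (hm : Interpolates m v) (hdm : Interpolates (d - m) v)
    (hmd : m ≤ d) (hv : ∀ i, v i ≠ 0) (hc : ∀ i, c i ≠ 0) :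
    waringRank n d (∑ i, c i • linForm (n + 1) (v i) ^ d) = r := by
  refine le_antisymm (Nat.sInf_le ⟨c, v, hv, rfl⟩) (le_csInf ⟨r, c, v, hv, rfl⟩ ?_)
  rintro r' ⟨c', w, -, hf⟩
  simpa using finrank_le_of_surjective_of_ker_le hm
    (ker_evalForms_le_iff.2 (hdm.vanishingForms_le_of_decomposition hmd hc hf))

lemma uniqueDecomp_sum_smul_linForm_pow (hm : Interpolates m v) (hdm : Interpolates (d - m) v)
    (hmd : m ≤ d) (hcut : IsCutOutInDegree m v) (hc : ∀ i, c i ≠ 0) :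
    UniqueDecomp n d r (∑ i, c i • linForm (n + 1) (v i) ^ d) c v := by
  intro c' w _ hw hf
  obtain ⟨hint, hle⟩ := surjective_and_ker_le_of_finrank_eq hm
    (ker_evalForms_le_iff.2 (hdm.vanishingForms_le_of_decomposition hmd hc hf)) rfl
  obtain ⟨π, lam, hlam, hwv⟩ := hcut.exists_perm (ker_evalForms_le_iff.1 hle) hint hw
  have hd : Interpolates d v := Nat.add_sub_cancel' hmd ▸ hm.add hdm
  have hind := hd.linearIndependent_linForm_pow.comp π π.injective
  refine ⟨π, lam, hlam, hwv, congrFun (hind.fintypeLinearCombination_injective ?_)⟩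
  calc ∑ j, (c' j * lam j ^ d) • linForm (n + 1) (v (π j)) ^ d
      = ∑ j, c' j • linForm (n + 1) (w j) ^ d := by
        simp only [hwv, linForm_smul, smul_pow, smul_smul]
    _ = ∑ i, c i • linForm (n + 1) (v i) ^ d := hf.symm
    _ = ∑ j, c (π j) • linForm (n + 1) (v (π j)) ^ d :=
        (Equiv.sum_comp π fun i => c i • linForm (n + 1) (v i) ^ d).symm

end WaringRank

end Apolarity

section Specialization

variable {σ ι R K : Type*} {s m t : ℕ} {V : ι → σ → R} {v : ι → σ → K}

section Map

variable [CommSemiring R] [CommSemiring K] {φ : R →+* K}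

lemma eval_map_of_comp_eq (hV : ∀ i, φ ∘ V i = v i) (i : ι) (p : MvPolynomial σ R) :
    eval (v i) (map φ p) = φ (eval (V i) p) := by
  rw [← hV, map_eval]

lemma map_mem_vanishingForms (hV : ∀ i, φ ∘ V i = v i) {p : MvPolynomial σ R}
    (hp : p ∈ vanishingForms s V) : map φ p ∈ vanishingForms s v := by
  obtain ⟨hp, hpV⟩ := mem_vanishingForms.1 hp
  exact mem_vanishingForms.2
    ⟨hp.map φ, fun i => by rw [eval_map_of_comp_eq hV, hpV, map_zero]⟩

lemma map_mem_mul_vanishingForms (hV : ∀ i, φ ∘ V i = v i) {p : MvPolynomial σ R}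
    (hp : p ∈ homogeneousSubmodule σ R t * vanishingForms s V) :
    map φ p ∈ homogeneousSubmodule σ K t * vanishingForms s v := by
  induction hp using Submodule.mul_induction_on' with
  | mem_mul_mem q hq g hg =>
    rw [map_mul]
    exact Submodule.mul_mem_mul (IsHomogeneous.map hq φ) (map_mem_vanishingForms hV hg)
  | add p _ q _ hp hq =>
    rw [map_add]
    exact Submodule.add_mem _ hp hq

lemma DualForms.specialize (hV : ∀ i, φ ∘ V i = v i) {D : R} {e : ι → MvPolynomial σ R}
    (h : DualForms s V D e) : DualForms s v (φ D) fun i => map φ (e i) where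
  isHomogeneous i := (h.isHomogeneous i).map φ
  eval_self i := by rw [eval_map_of_comp_eq hV, h.eval_self]
  eval_of_ne hij := by rw [eval_map_of_comp_eq hV, h.eval_of_ne hij, map_zero]

end Map

section Lift

variable [CommRing R] [CommRing K] {φ : R →+* K} {ψ : K →+* R} {D : R}
  {e : ι → MvPolynomial σ R}

lemma map_interpolationRemainder [Fintype ι] (hV : ∀ i, φ ∘ V i = v i) (p : MvPolynomial σ R) :
    map φ (interpolationRemainder V D e p) =
      interpolationRemainder v (φ D) (fun i => map φ (e i)) (map φ p) := by
  simp only [interpolationRemainder_apply, smul_eq_C_mul, map_sub, map_sum, map_mul, map_C,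
    eval_map_of_comp_eq hV]

/-- The adjugate of the matrix of values at `V` of lifted dual forms turns these forms into dual
forms for `V`. -/
lemma Interpolates.exists_dualForms_lift [Finite ι] (h : Interpolates s v)
    (hV : ∀ i, φ ∘ V i = v i) (hψ : φ.comp ψ = RingHom.id K) :
    ∃ D e, φ D = 1 ∧ DualForms s V D e := by
  classical
  have := Fintype.ofFinite ι
  obtain ⟨e, he⟩ := h.exists_dualForms
  let A : Matrix ι ι R := Matrix.of fun l j => eval (V j) (map ψ (e l))
  have hAval (l j : ι) : A l j = eval (V j) (map ψ (e l)) := rfl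
  have hA : φ.mapMatrix A = 1 := by
    ext l j
    rw [RingHom.mapMatrix_apply, Matrix.map_apply, hAval, ← eval_map_of_comp_eq hV,
      map_map, hψ, map_id, Matrix.one_apply]
    split_ifs with hlj
    · rw [hlj, he.eval_self]
    · rw [he.eval_of_ne hlj]
  have hval (i j : ι) : eval (V j) (∑ l, A.adjugate i l • map ψ (e l)) =
      (A.det • (1 : Matrix ι ι R)) i j := by
    rw [← Matrix.adjugate_mul, Matrix.mul_apply, map_sum]
    simp only [smul_eval, hAval]
  refine ⟨A.det, fun i => ∑ l, A.adjugate i l • map ψ (e l), ?_, ?_, ?_, ?_⟩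
  · rw [RingHom.map_det, hA, Matrix.det_one]
  · exact fun i => Submodule.sum_smul_mem (homogeneousSubmodule σ R s) _
      fun l _ => (he.isHomogeneous l).map ψ
  · exact fun i => by simp [hval]
  · exact fun hij => by simp [hval, hij]

lemma DualForms.exists_map_eq [Finite ι] (h : DualForms s V D e) (hD : φ D = 1)
    (hV : ∀ i, φ ∘ V i = v i) (hψ : φ.comp ψ = RingHom.id K) {g : MvPolynomial σ K}
    (hg : g ∈ vanishingForms s v) : ∃ G ∈ vanishingForms s V, map φ G = g := by
  have := Fintype.ofFinite ι
  obtain ⟨hg, hgv⟩ := mem_vanishingForms.1 hg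
  refine ⟨interpolationRemainder V D e (map ψ g), h.remainder_mem_vanishingForms (hg.map ψ), ?_⟩
  rw [map_interpolationRemainder hV, map_map, hψ, map_id, interpolationRemainder_eq_smul hgv, hD,
    one_smul]

lemma DualForms.exists_map_eq_of_mem_mul [Finite ι] (h : DualForms s V D e) (hD : φ D = 1)
    (hV : ∀ i, φ ∘ V i = v i) (hψ : φ.comp ψ = RingHom.id K) {p : MvPolynomial σ K}
    (hp : p ∈ homogeneousSubmodule σ K t * vanishingForms s v) :
    ∃ P ∈ homogeneousSubmodule σ R t * vanishingForms s V, map φ P = p := by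
  induction hp using Submodule.mul_induction_on' with
  | mem_mul_mem q hq g hg =>
    obtain ⟨G, hG, rfl⟩ := h.exists_map_eq hD hV hψ hg
    refine ⟨map ψ q * G, Submodule.mul_mem_mul (IsHomogeneous.map hq ψ) hG, ?_⟩
    rw [map_mul, map_map, hψ, map_id]
  | add p _ q _ hp hq =>
    obtain ⟨P, hP, rfl⟩ := hp
    obtain ⟨Q, hQ, rfl⟩ := hq
    exact ⟨P + Q, Submodule.add_mem _ hP hQ, map_add _ _ _⟩

lemma mem_ker_smul_homogeneousSubmodule {p : MvPolynomial σ R} (hp : p.IsHomogeneous s)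
    (hφ : map φ p = 0) : p ∈ RingHom.ker φ • homogeneousSubmodule σ R s := by
  rw [p.as_sum]
  refine Submodule.sum_mem _ fun μ hμ => ?_
  rw [← mul_one (coeff μ p), ← smul_eq_mul, ← smul_monomial]
  refine Submodule.smul_mem_smul ?_ (isHomogeneous_monomial 1 ?_)
  · rw [RingHom.mem_ker, ← coeff_map, hφ, coeff_zero]
  · exact (hp.degree_eq_sum_deg_support hμ).symm

lemma DualForms.mem_ker_smul_vanishingForms [Finite ι] (h : DualForms s V D e) (hD : φ D = 1)
    {p : MvPolynomial σ R} (hp : p ∈ vanishingForms s V) (hφ : map φ p = 0) :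
    p ∈ RingHom.ker φ • vanishingForms s V := by
  have := Fintype.ofFinite ι
  obtain ⟨hps, hpV⟩ := mem_vanishingForms.1 hp
  have hle : (homogeneousSubmodule σ R s).map (interpolationRemainder V D e) ≤
      vanishingForms s V :=
    Submodule.map_le_iff_le_comap.2 fun q hq => h.remainder_mem_vanishingForms hq
  have hDp : D • p ∈ RingHom.ker φ • vanishingForms s V := by
    have hrem := Submodule.mem_map_of_mem (f := interpolationRemainder V D e)
      (mem_ker_smul_homogeneousSubmodule hps hφ)
    rw [Submodule.map_smul'', interpolationRemainder_eq_smul hpV] at hrem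
    exact smul_mono_right _ hle hrem
  have h1D : (1 - D) • p ∈ RingHom.ker φ • vanishingForms s V :=
    Submodule.smul_mem_smul (by simp [RingHom.mem_ker, hD]) hp
  simpa [sub_smul] using Submodule.add_mem _ hDp h1D

open scoped Pointwise in
/-- Nakayama's lemma: generation modulo the kernel of the specialization is generation up to a
multiplier that specializes to `1`. -/
lemma VanishingGenerated.exists_smul_mem_mul [Finite ι] [Finite σ] [IsNoetherianRing R]
    (hgen : VanishingGenerated m t v) (hm : Interpolates m v) (hmt : Interpolates (m + t) v)
    (hV : ∀ i, φ ∘ V i = v i) (hψ : φ.comp ψ = RingHom.id K) :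
    ∃ r, φ r = 1 ∧ ∀ p ∈ vanishingForms (m + t) V,
      r • p ∈ homogeneousSubmodule σ R t * vanishingForms m V := by
  obtain ⟨D, e, hD, he⟩ := hm.exists_dualForms_lift hV hψ
  obtain ⟨D', e', hD', he'⟩ := hmt.exists_dualForms_lift hV hψ
  have hfg : (vanishingForms (m + t) V).FG :=
    (homogeneousSubmodule_fg σ R (m + t)).of_le vanishingForms_le_homogeneousSubmodule
  have hle : vanishingForms (m + t) V ≤ homogeneousSubmodule σ R t * vanishingForms m V ⊔
      RingHom.ker φ • vanishingForms (m + t) V := by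
    intro p hp
    obtain ⟨q, hq, hqp⟩ :=
      he.exists_map_eq_of_mem_mul hD hV hψ (hgen (map_mem_vanishingForms hV hp))
    have hpq : p - q ∈ vanishingForms (m + t) V :=
      Submodule.sub_mem _ hp (homogeneousSubmodule_mul_vanishingForms_le hq)
    exact Submodule.mem_sup.2 ⟨q, hq, p - q,
      he'.mem_ker_smul_vanishingForms hD' hpq (by rw [map_sub, hqp, sub_self]),
      add_sub_cancel q p⟩
  obtain ⟨r, hr, hrle⟩ := Submodule.exists_sub_one_mem_and_smul_le_of_fg_of_le_sup hfg le_rfl hle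
  refine ⟨r, ?_, fun p hp => hrle (Submodule.smul_mem_pointwise_smul p r _ hp)⟩
  rw [RingHom.mem_ker, map_sub, map_one] at hr
  exact sub_eq_zero.1 hr

end Lift

end Specialization

section ZariskiNeighbourhoods

variable {σ ι K : Type*}

section CommSemiring

variable [CommSemiring K]

/-- The value at the tuple `v` of a polynomial in the coordinates of a tuple. -/
noncomputable def evalTuple (v : ι → σ → K) : MvPolynomial (ι × σ) K →+* K :=
  eval fun q => v q.1 q.2

/-- The universal tuple, whose coordinates are the variables of a polynomial ring. -/
noncomputable def genericTuple (ι σ K : Type*) [CommSemiring K] : ι → σ → MvPolynomial (ι × σ) K :=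
  fun i j => X (i, j)

lemma evalTuple_comp_genericTuple (v : ι → σ → K) (i : ι) :
    evalTuple v ∘ genericTuple ι σ K i = v i := by
  ext j
  simp [evalTuple, genericTuple]

lemma evalTuple_comp_C (v : ι → σ → K) : (evalTuple v).comp C = RingHom.id K := by
  ext c
  simp [evalTuple]

end CommSemiring

variable [Field K] {s m t : ℕ} {v₀ : ι → σ → K}

/-- The property `P` holds on a Zariski neighbourhood of `v₀` in the space of tuples. -/
def HoldsNear (v₀ : ι → σ → K) (P : (ι → σ → K) → Prop) : Prop :=
  ∃ D, evalTuple v₀ D ≠ 0 ∧ ∀ v, evalTuple v D ≠ 0 → P v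

lemma HoldsNear.and {P Q : (ι → σ → K) → Prop} (hP : HoldsNear v₀ P) (hQ : HoldsNear v₀ Q) :
    HoldsNear v₀ fun v => P v ∧ Q v := by
  obtain ⟨D, hD, hDP⟩ := hP
  obtain ⟨E, hE, hEQ⟩ := hQ
  refine ⟨D * E, by simp [hD, hE], fun v hv => ?_⟩
  rw [map_mul] at hv
  exact ⟨hDP v (left_ne_zero_of_mul hv), hEQ v (right_ne_zero_of_mul hv)⟩

lemma HoldsNear.mono {P Q : (ι → σ → K) → Prop} (hP : HoldsNear v₀ P) (h : ∀ v, P v → Q v) :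
    HoldsNear v₀ Q := by
  obtain ⟨D, hD, hDP⟩ := hP
  exact ⟨D, hD, fun v hv => h v (hDP v hv)⟩

lemma Interpolates.holdsNear [Finite ι] (h : Interpolates s v₀) :
    HoldsNear v₀ (Interpolates s) := by
  obtain ⟨D, e, hD, he⟩ :=
    h.exists_dualForms_lift (evalTuple_comp_genericTuple v₀) (evalTuple_comp_C v₀)
  exact ⟨D, by simp [hD], fun v hv =>
    (he.specialize (evalTuple_comp_genericTuple v)).interpolates (isUnit_iff_ne_zero.2 hv)⟩

lemma VanishingGenerated.holdsNear [Finite ι] [Finite σ] (h : VanishingGenerated m t v₀)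
    (hm : Interpolates m v₀) (hmt : Interpolates (m + t) v₀) :
    HoldsNear v₀ (VanishingGenerated m t) := by
  have := Fintype.ofFinite ι
  obtain ⟨D, e, hD, he⟩ :=
    hmt.exists_dualForms_lift (evalTuple_comp_genericTuple v₀) (evalTuple_comp_C v₀)
  obtain ⟨r, hr, hrmem⟩ :=
    h.exists_smul_mem_mul hm hmt (evalTuple_comp_genericTuple v₀) (evalTuple_comp_C v₀)
  refine ⟨r * D, by simp [hr, hD], fun v hv p hp => ?_⟩
  obtain ⟨hp, hpv⟩ := mem_vanishingForms.1 hp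
  have hlift := map_mem_mul_vanishingForms (evalTuple_comp_genericTuple v)
    (hrmem _ (he.remainder_mem_vanishingForms (hp.map C)))
  rw [smul_eq_C_mul, map_mul, map_C, map_interpolationRemainder (evalTuple_comp_genericTuple v),
    map_map, evalTuple_comp_C, map_id, interpolationRemainder_eq_smul hpv, ← smul_eq_C_mul,
    smul_smul, ← map_mul] at hlift
  exact (Submodule.smul_mem_iff _ hv).1 hlift

end ZariskiNeighbourhoods

section HomogeneousIdeals

variable {σ R : Type*} [CommSemiring R] {m t : ℕ}

lemma homogeneousComponent_mul_of_isHomogeneous {g : MvPolynomial σ R} (hg : g.IsHomogeneous m)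
    (q : MvPolynomial σ R) (t : ℕ) :
    homogeneousComponent (m + t) (q * g) = homogeneousComponent t q * g := by
  let := gradedAlgebra (σ := σ) (R := R)
  have h := DirectSum.coe_decompose_mul_of_right_mem_of_le (𝒜 := homogeneousSubmodule σ R)
    (a := q) hg (Nat.le_add_right m t)
  rw [Nat.add_sub_cancel_left] at h
  simp only [← decomposition.decompose'_apply]
  exact h

lemma mem_homogeneousSubmodule_mul_span {S : Set (MvPolynomial σ R)}
    (hS : ∀ g ∈ S, g.IsHomogeneous m) {p : MvPolynomial σ R} (hp : p.IsHomogeneous (m + t))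
    (hpS : p ∈ Ideal.span S) :
    p ∈ homogeneousSubmodule σ R t * Submodule.span R S := by
  suffices h : homogeneousComponent (m + t) p ∈
      homogeneousSubmodule σ R t * Submodule.span R S by
    rwa [homogeneousComponent_of_mem hp, if_pos rfl] at h
  clear hp
  induction hpS using Submodule.closure_induction with
  | zero => simp
  | add p q _ _ hp hq =>
    rw [map_add]
    exact Submodule.add_mem _ hp hq
  | smul_mem q g hg =>
    rw [smul_eq_mul, homogeneousComponent_mul_of_isHomogeneous (hS g hg)]
    exact Submodule.mul_mem_mul (homogeneousComponent_isHomogeneous t q)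
      (Submodule.subset_span hg)

end HomogeneousIdeals

section LatticePoints

section Forms

variable (R : Type*) [CommRing R] {n : ℕ}

/-- The lattice point `a` of the affine chart `x_0 = 1`. -/
def latticePoint (a : Fin n → ℕ) : Fin (n + 1) → R :=
  Fin.cons 1 fun i => (a i : R)

/-- The homogenized falling factorial `x_i (x_i - x_0) ⋯ (x_i - (m - 1) x_0)`. -/
noncomputable def fallingForm (m : ℕ) (i : Fin n) : MvPolynomial (Fin (n + 1)) R :=
  ∏ j ∈ Finset.range m, (X i.succ - C (j : R) * X 0)

/-- The product of the forms `x_1 + ⋯ + x_n - j x_0` for `j ∈ s`, which vanishes at a lattice point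
exactly if its coordinate sum lies in `s`. -/
noncomputable def levelForm (n : ℕ) (s : Finset ℕ) : MvPolynomial (Fin (n + 1)) R :=
  ∏ j ∈ s, (∑ i : Fin n, X i.succ - C (j : R) * X 0)

lemma latticePoint_ne_zero [Nontrivial R] (a : Fin n → ℕ) : latticePoint R a ≠ 0 :=
  Function.ne_iff.2 ⟨0, one_ne_zero⟩

lemma isHomogeneous_fallingForm (m : ℕ) (i : Fin n) : (fallingForm R m i).IsHomogeneous m := by
  simpa [fallingForm] using IsHomogeneous.prod (Finset.range m) _ (fun _ => 1) fun j _ =>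
    (isHomogeneous_X R i.succ).sub (isHomogeneous_C_mul_X (j : R) 0)

lemma isHomogeneous_levelForm (s : Finset ℕ) : (levelForm R n s).IsHomogeneous s.card := by
  simpa [levelForm] using IsHomogeneous.prod s _ (fun _ => 1) fun j _ =>
    (IsHomogeneous.sum _ _ _ fun (i : Fin n) _ => isHomogeneous_X R i.succ).sub
      (isHomogeneous_C_mul_X (j : R) 0)

/-- Substituting `x_0 = T` identifies `R[x_0, …, x_n]` with `R[T][x_1, …, x_n]`. -/
noncomputable def dehomogenization (n : ℕ) :
    MvPolynomial (Fin (n + 1)) R ≃ₐ[R] MvPolynomial (Fin n) (Polynomial R) :=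
  (renameEquiv R (finSuccEquiv n)).trans (optionEquivRight R (Fin n))

lemma dehomogenization_fallingForm (m : ℕ) (i : Fin n) :
    dehomogenization R n (fallingForm R m i) =
      ∏ j ∈ Finset.range m, (X i - C (Polynomial.C (j : R) * Polynomial.X)) := by
  simp [dehomogenization, fallingForm]

lemma eval_dehomogenization (a : Fin n → ℕ) {k : ℕ} {f : MvPolynomial (Fin (n + 1)) R}
    (hf : f.IsHomogeneous k) :
    eval (fun i => Polynomial.C (a i : R) * Polynomial.X) (dehomogenization R n f) =
      Polynomial.X ^ k * Polynomial.C (eval (latticePoint R a) f) := by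
  have hcomp : (eval fun i => Polynomial.C (a i : R) * Polynomial.X).comp
      (dehomogenization R n : MvPolynomial (Fin (n + 1)) R →+* _) =
      (eval ((Polynomial.X : Polynomial R) • (Polynomial.C ∘ latticePoint R a))).comp
        (map Polynomial.C) := by
    ext i
    · simp [dehomogenization]
    · refine Fin.cases ?_ (fun i => ?_) i <;> simp [dehomogenization, latticePoint, mul_comm]
  calc _ = eval ((Polynomial.X : Polynomial R) • (Polynomial.C ∘ latticePoint R a))
        (map Polynomial.C f) := RingHom.congr_fun hcomp f
    _ = _ := by rw [eval_smul_of_isHomogeneous (hf.map _), ← map_eval]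

/-- Dehomogenizing by `x_0 = T` turns the falling forms into the polynomials of the Combinatorial
Nullstellensatz for the grid with coordinates `0, T, …, (m - 1) T`. -/
lemma mem_span_fallingForm [IsDomain R] [CharZero R] {m k : ℕ} (hm : m ≠ 0)
    {f : MvPolynomial (Fin (n + 1)) R} (hf : f.IsHomogeneous k)
    (hzero : ∀ a : Fin n → ℕ, (∀ i, a i < m) → eval (latticePoint R a) f = 0) :
    f ∈ Ideal.span (Set.range (fallingForm (n := n) R m)) := by
  classical
  let T (j : ℕ) : Polynomial R := Polynomial.C (j : R) * Polynomial.X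
  have hT : Function.Injective T := fun i j hij => by
    simpa [T] using congrArg (Polynomial.eval 1) hij
  have hgrid (x : Fin n → Polynomial R) (hx : ∀ i, x i ∈ (Finset.range m).image T) :
      eval x (dehomogenization R n f) = 0 := by
    choose a ha hax using fun i => Finset.mem_image.1 (hx i)
    rw [← funext hax, eval_dehomogenization R a hf,
      hzero a fun i => Finset.mem_range.1 (ha i), map_zero, mul_zero]
  obtain ⟨h, -, hh⟩ := combinatorial_nullstellensatz_exists_linearCombination _
    (fun _ => (Finset.nonempty_range_iff.2 hm).image T) _ hgrid
  rw [Finsupp.linearCombination_apply, Finsupp.sum_fintype _ _ (by simp)] at hh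
  refine Ideal.mem_span_range_iff_exists_fun.2 ⟨fun i => (dehomogenization R n).symm (h i), ?_⟩
  refine (dehomogenization R n).injective ?_
  rw [hh, map_sum]
  refine Finset.sum_congr rfl fun i _ => ?_
  rw [map_mul, AlgEquiv.apply_symm_apply, dehomogenization_fallingForm, smul_eq_mul,
    Finset.prod_image hT.injOn]

section CharZero

variable [IsDomain R] [CharZero R]

lemma eval_latticePoint_fallingForm_eq_zero (m : ℕ) (i : Fin n) (a : Fin n → ℕ) :
    eval (latticePoint R a) (fallingForm R m i) = 0 ↔ a i < m := by
  simp [fallingForm, latticePoint, Finset.prod_eq_zero_iff, sub_eq_zero]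

lemma eval_latticePoint_levelForm_eq_zero (s : Finset ℕ) (a : Fin n → ℕ) :
    eval (latticePoint R a) (levelForm R n s) = 0 ↔ ∑ i, a i ∈ s := by
  simp only [levelForm, latticePoint, map_prod, map_sub, map_sum, map_mul, eval_C, eval_X,
    Fin.cons_zero, Fin.cons_succ, mul_one, Finset.prod_eq_zero_iff, sub_eq_zero]
  norm_cast
  simp

/-- The form `∏ i, x_i (x_i - x_0) ⋯ (x_i - (a_i - 1) x_0)` vanishes at the lattice points `b` with
`b ≱ a`, and `levelForm` takes care of the remaining `b ≠ a`, for which `|a| < |b| ≤ s`. -/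
lemma exists_form_separating_latticePoint {s : ℕ} {a : Fin n → ℕ} (ha : ∑ i, a i ≤ s) :
    ∃ e : MvPolynomial (Fin (n + 1)) R, e.IsHomogeneous s ∧ eval (latticePoint R a) e ≠ 0 ∧
      ∀ b ≠ a, ∑ i, b i ≤ s → eval (latticePoint R b) e = 0 := by
  have heval (b : Fin n → ℕ) : eval (latticePoint R b)
      ((∏ i, fallingForm R (a i) i) * levelForm R n (Finset.Ioc (∑ i, a i) s)) = 0 ↔
        (∃ i, b i < a i) ∨ ∑ i, b i ∈ Finset.Ioc (∑ i, a i) s := by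
    simp [Finset.prod_eq_zero_iff, eval_latticePoint_fallingForm_eq_zero,
      eval_latticePoint_levelForm_eq_zero]
  refine ⟨_, ?_, mt (heval a).1 (by simp), fun b hba hb => (heval b).2 ?_⟩
  · have h := (IsHomogeneous.prod Finset.univ _ a fun i _ =>
      isHomogeneous_fallingForm R (a i) i).mul (isHomogeneous_levelForm R (n := n)
        (Finset.Ioc (∑ i, a i) s))
    rwa [Nat.card_Ioc, Nat.add_sub_cancel' ha] at h
  · by_contra! hcon
    obtain ⟨hab, hmem⟩ := hcon
    have hle : a ≤ b := hab
    have hlt := Fintype.sum_strictMono (lt_of_le_of_ne hle hba.symm)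
    exact hmem (Finset.mem_Ioc.2 ⟨hlt, hb⟩)

end CharZero

end Forms

/-- The lattice points of the simplex `|a| ≤ m` in the orthant. -/
def latticeSimplex (n m : ℕ) : Finset (Fin n → ℕ) :=
  (Fintype.piFinset fun _ => Finset.range (m + 1)).filter fun a => ∑ i, a i ≤ m

/-- The simplex `|a| ≤ m` without its vertices: the lattice points with `a_i < m` for all `i` and
`1 ≤ |a| ≤ m`. -/
def truncatedSimplex (n m : ℕ) : Finset (Fin n → ℕ) :=
  (Fintype.piFinset fun _ => Finset.range m).filter fun a => ∑ i, a i ∈ Finset.Ioc 0 m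

variable {n m : ℕ}

lemma mem_latticeSimplex {a : Fin n → ℕ} : a ∈ latticeSimplex n m ↔ ∑ i, a i ≤ m := by
  simp only [latticeSimplex, Finset.mem_filter, Fintype.mem_piFinset, Finset.mem_range,
    and_iff_right_iff_imp]
  exact fun h i => Nat.lt_succ_of_le
    ((Finset.single_le_sum (fun _ _ => Nat.zero_le _) (Finset.mem_univ i)).trans h)

lemma mem_truncatedSimplex {a : Fin n → ℕ} :
    a ∈ truncatedSimplex n m ↔ (∀ i, a i < m) ∧ ∑ i, a i ∈ Finset.Ioc 0 m := by
  simp [truncatedSimplex]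

lemma card_latticeSimplex (n m : ℕ) : (latticeSimplex n m).card = (n + m).choose n := by
  have h : (latticeSimplex n m).card =
      (Finset.finsuppAntidiag (Finset.univ : Finset (Fin (n + 1))) m).card := by
    refine Finset.card_bij' (fun a _ => Finsupp.equivFunOnFinite.symm (Fin.cons (m - ∑ i, a i) a))
      (fun b _ => Fin.tail b) (fun a ha => ?_) (fun b hb => ?_) (fun a _ => rfl) (fun b hb => ?_)
    · simp [Finset.mem_finsuppAntidiag, Fin.sum_univ_succ, mem_latticeSimplex.1 ha]
    · have hsum := (Finset.mem_finsuppAntidiag.1 hb).1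
      rw [Fin.sum_univ_succ] at hsum
      exact mem_latticeSimplex.2 (hsum ▸ Nat.le_add_left _ _)
    · have hsum := (Finset.mem_finsuppAntidiag.1 hb).1
      rw [Fin.sum_univ_succ] at hsum
      ext i
      refine Fin.cases ?_ (fun i => rfl) i
      exact Nat.sub_eq_of_eq_add hsum.symm
  rw [h, Finset.card_finsuppAntidiag_nat_eq_choose, Finset.card_univ, Fintype.card_fin,
    Nat.add_right_comm, Nat.add_sub_cancel, Nat.choose_symm_add]

lemma eq_single_of_sum_le {a : Fin n → ℕ} (ha : ∑ i, a i ≤ m) {i : Fin n} (hi : m ≤ a i) :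
    Pi.single i m = a := by
  have hsum := Finset.add_sum_erase Finset.univ a (Finset.mem_univ i)
  have hzero : ∑ j ∈ Finset.univ.erase i, a j = 0 := by omega
  ext j
  obtain rfl | hj := eq_or_ne j i
  · rw [Pi.single_eq_same]
    omega
  · rw [Pi.single_eq_of_ne hj, Finset.sum_eq_zero_iff.1 hzero j (by simp [hj])]

lemma latticeSimplex_subset (n m : ℕ) : latticeSimplex n m ⊆
    truncatedSimplex n m ∪ insert 0 (Finset.univ.image fun i => Pi.single i m) := by
  intro a ha
  simp only [Finset.mem_union, Finset.mem_insert, Finset.mem_image, Finset.mem_univ, true_and]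
  rw [mem_latticeSimplex] at ha
  by_cases hlt : ∀ i, a i < m
  · obtain hsum | hsum := (∑ i, a i).eq_zero_or_pos
    · exact Or.inr (Or.inl (funext fun i => Finset.sum_eq_zero_iff.1 hsum i (Finset.mem_univ i)))
    · exact Or.inl (mem_truncatedSimplex.2 ⟨hlt, Finset.mem_Ioc.2 ⟨hsum, ha⟩⟩)
  · push Not at hlt
    obtain ⟨i, hi⟩ := hlt
    exact Or.inr (Or.inr ⟨i, eq_single_of_sum_le ha hi⟩)

lemma le_card_truncatedSimplex (n m : ℕ) :
    (n + m).choose n - n - 1 ≤ (truncatedSimplex n m).card := by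
  have himage : (Finset.univ.image fun i : Fin n => (Pi.single i m : Fin n → ℕ)).card ≤ n :=
    Finset.card_image_le.trans_eq (Finset.card_fin n)
  rw [Nat.sub_sub, Nat.sub_le_iff_le_add, ← card_latticeSimplex]
  calc (latticeSimplex n m).card
      ≤ (truncatedSimplex n m ∪ insert 0 (Finset.univ.image fun i => Pi.single i m)).card :=
        Finset.card_le_card (latticeSimplex_subset n m)
    _ ≤ (truncatedSimplex n m).card + (n + 1) :=
        (Finset.card_union_le _ _).trans (Nat.add_le_add_left
          ((Finset.card_insert_le _ _).trans (Nat.add_le_add_right himage 1)) _)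

variable (K : Type*) [Field K] [CharZero K]

lemma interpolates_latticePoint {ι : Type*} [Finite ι] {s : ℕ} {a : ι → Fin n → ℕ}
    (ha : Function.Injective a) (hs : ∀ i, ∑ l, a i l ≤ s) :
    Interpolates s fun i => latticePoint K (a i) := by
  refine interpolates_of_forall_exists fun i => ?_
  obtain ⟨e, he, hself, hne⟩ := exists_form_separating_latticePoint K (hs i)
  exact ⟨e, he, hself, fun j hji => hne _ (ha.ne hji) (hs j)⟩

lemma interpolates_truncatedSimplex (n m : ℕ) :
    Interpolates m fun a : truncatedSimplex n m => latticePoint K a.1 :=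
  interpolates_latticePoint K Subtype.val_injective fun a =>
    (Finset.mem_Ioc.1 (mem_truncatedSimplex.1 a.2).2).2

lemma levelForm_mem_vanishingForms (n m : ℕ) : levelForm K n (Finset.Ioc 0 m) ∈
    vanishingForms m fun a : truncatedSimplex n m => latticePoint K a.1 :=
  mem_vanishingForms.2 ⟨by simpa using isHomogeneous_levelForm K (n := n) (Finset.Ioc 0 m),
    fun a => (eval_latticePoint_levelForm_eq_zero K _ _).2 (mem_truncatedSimplex.1 a.2).2⟩

lemma span_fallingForm_le_vanishingForms (n m : ℕ) :
    Submodule.span K (Set.range (fallingForm (n := n) K m)) ≤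
      vanishingForms m fun a : truncatedSimplex n m => latticePoint K a.1 := by
  rw [Submodule.span_le, Set.range_subset_iff]
  exact fun i => mem_vanishingForms.2 ⟨isHomogeneous_fallingForm K m i, fun a =>
    (eval_latticePoint_fallingForm_eq_zero K m i a).2 ((mem_truncatedSimplex.1 a.2).1 i)⟩

/-- Up to a multiple of the level form, a form vanishing on the truncated simplex vanishes on the
whole grid `a_i < m`, and then the Combinatorial Nullstellensatz applies. -/
lemma vanishingGenerated_truncatedSimplex {t : ℕ} (hm : m ≠ 0) (ht : n * (m - 1) ≤ t) :
    VanishingGenerated m t fun a : truncatedSimplex n m => latticePoint K a.1 := by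
  intro p hp
  obtain ⟨hp, hpv⟩ := mem_vanishingForms.1 hp
  let grid : Finset (Fin n → ℕ) := Fintype.piFinset fun _ => Finset.range m
  have mem_grid {a : Fin n → ℕ} : a ∈ grid ↔ ∀ i, a i < m := by simp [grid]
  have hgrid : Interpolates t fun a : grid => latticePoint K a.1 := by
    refine interpolates_latticePoint K Subtype.val_injective fun a => le_trans ?_ ht
    have hle := Finset.sum_le_card_nsmul Finset.univ a.1 (m - 1) fun i _ =>
      Nat.le_sub_one_of_lt (mem_grid.1 a.2 i)
    simpa using hle
  have hlevel := levelForm_mem_vanishingForms K n m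
  obtain ⟨q, hq, hres⟩ :=
    hgrid.exists_sub_mul_mem_vanishingForms (mem_vanishingForms.1 hlevel).1 hp fun a ha =>
      hpv ⟨a, mem_truncatedSimplex.2
        ⟨mem_grid.1 a.2, (eval_latticePoint_levelForm_eq_zero K _ _).1 ha⟩⟩
  obtain ⟨hreshom, hreszero⟩ := mem_vanishingForms.1 hres
  have hfalling : p - q * levelForm K n (Finset.Ioc 0 m) ∈ homogeneousSubmodule _ K t *
      vanishingForms m fun a : truncatedSimplex n m => latticePoint K a.1 :=
    mul_le_mul_right (span_fallingForm_le_vanishingForms K n m) _ (mem_homogeneousSubmodule_mul_span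
      (Set.forall_mem_range.2 (isHomogeneous_fallingForm K m)) hreshom
      (mem_span_fallingForm K hm hreshom fun a ha => hreszero ⟨a, mem_grid.2 ha⟩))
  have hmul : q * levelForm K n (Finset.Ioc 0 m) ∈ homogeneousSubmodule _ K t *
      vanishingForms m fun a : truncatedSimplex n m => latticePoint K a.1 :=
    Submodule.mul_mem_mul hq hlevel
  exact sub_add_cancel p (q * levelForm K n (Finset.Ioc 0 m)) ▸
    Submodule.add_mem _ hfalling hmul

lemma exists_interpolates {r s : ℕ} (hr : r ≤ (n + s).choose n) :
    ∃ v₀ : Fin r → Fin (n + 1) → K, Interpolates s v₀ := by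
  obtain ⟨a⟩ : Nonempty (Fin r ↪ latticeSimplex n s) :=
    Function.Embedding.nonempty_of_card_le (by simpa [card_latticeSimplex] using hr)
  exact ⟨_, interpolates_latticePoint K (Subtype.val_injective.comp a.injective) fun i =>
    mem_latticeSimplex.1 (a i).2⟩

lemma exists_interpolates_and_vanishingGenerated {r t : ℕ} (hm : m ≠ 0) (ht : n * (m - 1) ≤ t)
    (hr : r ≤ (n + m).choose n - n - 1) :
    ∃ v₀ : Fin r → Fin (n + 1) → K, Interpolates m v₀ ∧ VanishingGenerated m t v₀ := by
  obtain ⟨a⟩ : Nonempty (Fin r ↪ truncatedSimplex n m) :=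
    Function.Embedding.nonempty_of_card_le
      (by simpa using hr.trans (le_card_truncatedSimplex n m))
  have hint := interpolates_truncatedSimplex K n m
  exact ⟨_, hint.comp a.injective, (vanishingGenerated_truncatedSimplex K hm ht).comp hint
    (fun _ => latticePoint_ne_zero K _) a⟩

end LatticePoints

section GeneralTuples

variable (K : Type*) [Field K] [CharZero K] {n r : ℕ}

lemma exists_holdsNear_isCutOutInDegree_self {m : ℕ} (hm : m ≠ 0)
    (hr : r ≤ (n + m).choose n - n - 1) :
    ∃ v₀ : Fin r → Fin (n + 1) → K,
      HoldsNear v₀ fun v => Interpolates m v ∧ IsCutOutInDegree m v := by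
  obtain ⟨v₀, hint, hgen⟩ :=
    exists_interpolates_and_vanishingGenerated K hm (n * (m - 1)).le_succ hr
  refine ⟨v₀, (hint.holdsNear.and (hgen.holdsNear hint
    (hint.add_right (hint.ne_zero hm) _))).mono fun v ⟨hv, hgenv⟩ => ⟨hv, ?_⟩⟩
  have hadd := hv.add_right (hv.ne_zero hm) (n * (m - 1))
  exact hgenv.isCutOutInDegree (hadd.isCutOutInDegree_succ (hv.ne_zero hm))

lemma exists_holdsNear_isCutOutInDegree_succ {s : ℕ} (hs : s ≠ 0) (hr : r ≤ (n + s).choose n) :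
    ∃ v₀ : Fin r → Fin (n + 1) → K,
      HoldsNear v₀ fun v => Interpolates s v ∧ IsCutOutInDegree (s + 1) v := by
  obtain ⟨v₀, hint⟩ := exists_interpolates K hr
  exact ⟨v₀, hint.holdsNear.mono fun v hv => ⟨hv, hv.isCutOutInDegree_succ (hv.ne_zero hs)⟩⟩

lemma exists_holdsNear_isCutOutInDegree {d : ℕ} (hd : 3 ≤ d)
    (hre : Even d → r ≤ (n + (d + 1) / 2).choose n - n - 1)
    (hro : Odd d → r ≤ (n + (d + 1) / 2 - 1).choose n) :
    ∃ v₀ : Fin r → Fin (n + 1) → K, HoldsNear v₀ fun v =>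
      Interpolates (d - (d + 1) / 2) v ∧ IsCutOutInDegree ((d + 1) / 2) v := by
  obtain hde | hdo := Nat.even_or_odd d
  · have hdm : d - (d + 1) / 2 = (d + 1) / 2 := by grind
    rw [hdm]
    exact exists_holdsNear_isCutOutInDegree_self K (by omega) (hre hde)
  · have hm : (d + 1) / 2 = d - (d + 1) / 2 + 1 := by grind
    have hnm : n + (d + 1) / 2 - 1 = n + (d - (d + 1) / 2) := by omega
    have hnear := exists_holdsNear_isCutOutInDegree_succ K (by omega) (hnm ▸ hro hdo)
    rwa [← hm] at hnear

end GeneralTuples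

/-- **Improved Iarrobino–Kanev bound** (Theorem 2.5): with `m = ⌈d/2⌉`, if
`r ≤ binom(n+m,n) − n − 1` (`d` even) or `r ≤ binom(n+m−1,n)` (`d` odd), then for a
general tuple `(v_1,…,v_r)`, with `f = Σ v_i^d` and `Z = {v_1,…,v_r}`:
(a) `ker C_f^m = I_{Z,m}`;
(b) the common zero locus of `I_{Z,m}` is exactly `{[v_1],…,[v_r]}`;
(c) `f` has symmetric rank `r` with unique Waring decomposition. -/
theorem statement4 (n d r : ℕ) (hn : 1 ≤ n) (hd : 3 ≤ d)
    (hre : Even d → r ≤ Nat.choose (n + (d + 1) / 2) n - n - 1)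
    (hro : Odd d → r ≤ Nat.choose (n + (d + 1) / 2 - 1) n) :
    ∃ D : MvPolynomial (Fin r × Fin (n+1)) ℂ, D ≠ 0 ∧
      ∀ v : Fin r → Fin (n+1) → ℂ,
        MvPolynomial.eval (fun q => v q.1 q.2) D ≠ 0 →
        (∀ p : MvPolynomial (Fin (n+1)) ℂ, p.IsHomogeneous ((d + 1) / 2) →
          (diffOp p (∑ i, (linForm (n+1) (v i)) ^ d) = 0 ↔
            ∀ i, MvPolynomial.eval (v i) p = 0)) ∧
        (∀ w : Fin (n+1) → ℂ, w ≠ 0 →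
          ((∀ p : MvPolynomial (Fin (n+1)) ℂ, p.IsHomogeneous ((d + 1) / 2) →
              (∀ i, MvPolynomial.eval (v i) p = 0) → MvPolynomial.eval w p = 0) ↔
            ∃ i, ∃ lam : ℂ, w = lam • v i)) ∧
        waringRank n d (∑ i, (linForm (n+1) (v i)) ^ d) = r ∧
        UniqueDecomp n d r (∑ i, (linForm (n+1) (v i)) ^ d) (fun _ => 1) v := by
  obtain ⟨v₀, D, hD, hnear⟩ := exists_holdsNear_isCutOutInDegree ℂ hd hre hro
  refine ⟨D, fun h => hD (by rw [h, map_zero]), fun v hv => ?_⟩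
  obtain ⟨hdm, hcut⟩ := hnear v hv
  have hmd : (d + 1) / 2 ≤ d := by omega
  have hle : d - (d + 1) / 2 ≤ (d + 1) / 2 := by omega
  have hv0 := hdm.ne_zero (by omega)
  have hm : Interpolates ((d + 1) / 2) v :=
    Nat.add_sub_cancel' hle ▸ hdm.add_right hv0 ((d + 1) / 2 - (d - (d + 1) / 2))
  have hone (i : Fin r) : (fun _ => 1 : Fin r → ℂ) i ≠ 0 := one_ne_zero
  rw [show ∑ i, linForm (n + 1) (v i) ^ d = ∑ i, (1 : ℂ) • linForm (n + 1) (v i) ^ d by simp]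
  refine ⟨fun p hp => hdm.diffOp_eq_zero_iff hmd hone hp, fun w hw => ⟨fun hzero => ?_, ?_⟩,
    waringRank_sum_smul_linForm_pow hm hdm hmd hv0 hone,
    uniqueDecomp_sum_smul_linForm_pow hm hdm hmd hcut hone⟩
  · exact hcut w hw fun p hp =>
      hzero p (mem_vanishingForms.1 hp).1 (mem_vanishingForms.1 hp).2
  · rintro ⟨i, c, rfl⟩ p hp hpv
    rw [eval_smul_of_isHomogeneous hp, hpv, mul_zero]
end

section
/- Let n ≥ 1, m ≥ 2, V = ℂ^{n+1}. For a general symmetric m-multilinear map M : V^m → V (i.e., off the zero set of some nonzero polynomial in the coefficients of M), the set of eigenvector lines {[v] ∈ P^n : v ≠ 0 and M(v,…,v) ∧ v = 0 in Λ²V, i.e. M(v,…,v) = λv for some λ ∈ ℂ} is finite of cardinality exactly (m^{n+1} − 1)/(m − 1) = Σ_{i=0}^n m^i. -/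
open MvPolynomial

/-!
A nonzero fixed point of `p` spans an eigenvector line, and every eigenvector line with nonzero
eigenvalue contains exactly `m - 1` of them, since `p` is homogeneous of degree `m` and rescaling
the eigenvalue to `1` means choosing an `(m - 1)`-th root. So if `0` is the only common zero of `p`
in `N` variables, then counting eigenvector lines amounts to showing that `p z = z` has `m ^ N`
solutions.

Write each exponent in base `m` as `m α + ρ` with digits `ρ i < m`. For `f = p - X` the linear map
`X ^ (m α + ρ) ↦ f ^ α X ^ ρ` is the identity if `f i = X i ^ m`, and it is bijective if its
determinants on forms of bounded degree, computed with the top degree part `p` of `f`, do not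
vanish. In that case the monomials `X ^ ρ` are a basis of the coordinate ring of the fixed points,
over any ring of coefficients. This free algebra of rank `m ^ N` has `m ^ N` points over an
algebraically closed field exactly when the characteristic polynomial of multiplication by some
element is separable. The discriminant of that polynomial depends polynomially on `p`, up to
inverting the determinants, and it does not vanish identically because `z i ^ m = z i` has `m ^ N`
solutions.
-/

namespace TensorEigenvectors
section DigitMap

variable {ι A B : Type*} [Fintype ι] [CommSemiring A] [CommSemiring B]

/-- The `A`-linear map which replaces `X i ^ m` by `f i` in every monomial: if `ν = m • α + ρ` with
all `ρ i < m`, then `X ^ ν` goes to `f ^ α * X ^ ρ`. It is bijective exactly when every polynomial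
has a unique expansion in powers of the `f i` with digits of degree `< m` in each variable. -/
noncomputable def digitMap (m : ℕ) (f : ι → MvPolynomial ι A) :
    MvPolynomial ι A →ₗ[A] MvPolynomial ι A :=
  (basisMonomials ι A).constr A fun ν => ∏ i, f i ^ (ν i / m) * X i ^ (ν i % m)

theorem digitMap_monomial_one (m : ℕ) (f : ι → MvPolynomial ι A) (ν : ι →₀ ℕ) :
    digitMap m f (monomial ν 1) = ∏ i, f i ^ (ν i / m) * X i ^ (ν i % m) := by
  simpa only [digitMap, coe_basisMonomials] using (basisMonomials ι A).constr_basis A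
    (fun ν => ∏ i, f i ^ (ν i / m) * X i ^ (ν i % m)) ν

theorem digitMap_monomial (m : ℕ) (f : ι → MvPolynomial ι A) (ν : ι →₀ ℕ) (a : A) :
    digitMap m f (monomial ν a) = C a * ∏ i, f i ^ (ν i / m) * X i ^ (ν i % m) := by
  rw [← digitMap_monomial_one, ← smul_eq_C_mul, ← map_smul, smul_monomial, smul_eq_mul, mul_one]

theorem digitMap_monomial_of_lt {m : ℕ} (f : ι → MvPolynomial ι A) {ν : ι →₀ ℕ}
    (hν : ∀ i, ν i < m) : digitMap m f (monomial ν 1) = monomial ν 1 := by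
  rw [digitMap_monomial_one, monomial_eq, C_1, one_mul, Finsupp.prod_fintype _ _ (by simp)]
  exact Finset.prod_congr rfl fun i _ => by
    rw [Nat.div_eq_of_lt (hν i), Nat.mod_eq_of_lt (hν i), pow_zero, one_mul]

theorem digitMap_monomial_single_add {m : ℕ} (hm : 0 < m) (f : ι → MvPolynomial ι A) (k : ι)
    (ν : ι →₀ ℕ) :
    digitMap m f (monomial (Finsupp.single k m + ν) 1) = f k * digitMap m f (monomial ν 1) := by
  classical
  have h_prod : f k = ∏ i, if i = k then f i else 1 := by simp
  rw [digitMap_monomial_one, digitMap_monomial_one, h_prod, ← Finset.prod_mul_distrib]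
  refine Finset.prod_congr rfl fun i _ => ?_
  rcases eq_or_ne i k with rfl | hik
  · simp [Nat.add_div_left _ hm, pow_succ', mul_assoc]
  · simp [hik]

theorem digitMap_X_pow_mul {m : ℕ} (hm : 0 < m) (f : ι → MvPolynomial ι A) (k : ι)
    (q : MvPolynomial ι A) : digitMap m f (X k ^ m * q) = f k * digitMap m f q := by
  suffices h : digitMap m f ∘ₗ LinearMap.mulLeft A (X k ^ m) =
      LinearMap.mulLeft A (f k) ∘ₗ digitMap m f from LinearMap.congr_fun h q
  refine (basisMonomials ι A).ext fun ν => ?_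
  simp [X_pow_eq_monomial, monomial_mul, digitMap_monomial_single_add hm]

theorem map_digitMap (φ : A →+* B) (m : ℕ) (f : ι → MvPolynomial ι A) (q : MvPolynomial ι A) :
    map φ (digitMap m f q) = digitMap m (fun i => map φ (f i)) (map φ q) := by
  induction q using MvPolynomial.induction_on' with
  | monomial ν a =>
    simp only [digitMap_monomial, map_monomial, map_mul, map_C, map_prod, map_pow, map_X]
  | add p q hp hq => simp only [map_add, hp, hq]

theorem digitMap_X_pow (m : ℕ) : digitMap m (fun i : ι => (X i ^ m : MvPolynomial ι A)) = .id := by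
  refine (basisMonomials ι A).ext fun ν => ?_
  simp only [coe_basisMonomials, LinearMap.id_apply, digitMap_monomial_one, ← pow_mul, ← pow_add,
    Nat.div_add_mod]
  rw [monomial_eq, C_1, one_mul, Finsupp.prod_fintype _ _ (by simp)]

end DigitMap

section Degree

variable {ι A : Type*} [CommSemiring A]

theorem restrictTotalDegree_le_iff {e : ℕ} {S : Submodule A (MvPolynomial ι A)} :
    restrictTotalDegree ι A e ≤ S ↔ ∀ ν : ι →₀ ℕ, ν.degree ≤ e → monomial ν 1 ∈ S := by
  rw [restrictTotalDegree, restrictSupport_eq_span, Submodule.span_le, Set.image_subset_iff]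
  rfl

theorem homogeneousSubmodule_le_iff {e : ℕ} {S : Submodule A (MvPolynomial ι A)} :
    homogeneousSubmodule ι A e ≤ S ↔ ∀ ν : ι →₀ ℕ, ν.degree = e → monomial ν 1 ∈ S := by
  refine ⟨fun h ν hν => h (isHomogeneous_monomial 1 hν), fun h q hq => ?_⟩
  rw [q.as_sum]
  refine sum_mem fun ν hν => ?_
  rw [← mul_one (coeff ν q), ← smul_eq_mul, ← smul_monomial]
  refine S.smul_mem _ (h ν ?_)
  by_contra hne
  exact mem_support_iff.1 hν (hq.coeff_eq_zero hne)

theorem monomial_one_mem_restrictTotalDegree {ν : ι →₀ ℕ} {e : ℕ} (hν : ν.degree ≤ e) :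
    monomial ν 1 ∈ restrictTotalDegree ι A e :=
  restrictTotalDegree_le_iff.1 le_rfl ν hν

theorem coeff_eq_zero_of_mem_span_X_pow {m : ℕ} {q : MvPolynomial ι A}
    (hq : q ∈ Ideal.span (Set.range fun i => X i ^ m)) {ν : ι →₀ ℕ} (hν : ∀ i, ν i < m) :
    coeff ν q = 0 := by
  have h_range : (Set.range fun i => X i ^ m : Set (MvPolynomial ι A)) =
      (fun ν => monomial ν 1) '' Set.range fun i => Finsupp.single i m := by
    simp only [X_pow_eq_monomial, ← Set.range_comp, Function.comp_def]
  rw [h_range, mem_ideal_span_monomial_image] at hq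
  by_contra h_ne
  obtain ⟨_, ⟨i, rfl⟩, hi⟩ := hq ν (mem_support_iff.2 h_ne)
  exact (hν i).not_ge (Finsupp.single_le_iff.1 hi)

variable [Fintype ι]

theorem exists_le_apply_of_lt_degree {m : ℕ} {ν : ι →₀ ℕ}
    (hν : Fintype.card ι * (m - 1) < ν.degree) : ∃ k, m ≤ ν k := by
  by_contra! hlt
  refine hν.not_ge ?_
  rw [Finsupp.degree_eq_sum, ← smul_eq_mul, ← Finset.card_univ]
  exact Finset.sum_le_card_nsmul _ _ _ fun i _ => Nat.le_sub_one_of_lt (hlt i)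

theorem isHomogeneous_digitMap {m e : ℕ} {p : ι → MvPolynomial ι A}
    (hp : ∀ i, (p i).IsHomogeneous m) {q : MvPolynomial ι A} (hq : q.IsHomogeneous e) :
    (digitMap m p q).IsHomogeneous e := by
  suffices h : homogeneousSubmodule ι A e ≤ (homogeneousSubmodule ι A e).comap (digitMap m p) from
    h hq
  refine homogeneousSubmodule_le_iff.2 fun ν hν => ?_
  rw [Submodule.mem_comap, digitMap_monomial_one, mem_homogeneousSubmodule, ← hν,
    Finsupp.degree_eq_sum]
  refine IsHomogeneous.prod _ _ _ fun i _ => ?_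
  simpa only [Nat.div_add_mod] using ((hp i).pow (ν i / m)).mul (isHomogeneous_X_pow i (ν i % m))

theorem totalDegree_digitMap_le {m : ℕ} {f : ι → MvPolynomial ι A}
    (hf : ∀ i, (f i).totalDegree ≤ m) (q : MvPolynomial ι A) :
    (digitMap m f q).totalDegree ≤ q.totalDegree := by
  suffices h : restrictTotalDegree ι A q.totalDegree ≤
      (restrictTotalDegree ι A q.totalDegree).comap (digitMap m f) from
    (mem_restrictTotalDegree _ _ _).1 (h ((mem_restrictTotalDegree _ _ _).2 le_rfl))
  refine restrictTotalDegree_le_iff.2 fun ν hν => ?_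
  rw [Submodule.mem_comap, digitMap_monomial_one, mem_restrictTotalDegree]
  refine ((totalDegree_finsetProd _ _).trans (Finset.sum_le_sum fun i _ => ?_)).trans
    ((Finsupp.degree_eq_sum ν).ge.trans hν)
  calc (f i ^ (ν i / m) * X i ^ (ν i % m)).totalDegree
      ≤ ν i / m * (f i).totalDegree + ν i % m :=
        (totalDegree_mul _ _).trans (add_le_add (totalDegree_pow _ _)
          (isHomogeneous_X_pow i (ν i % m)).totalDegree_le)
    _ ≤ ν i / m * m + ν i % m := by gcongr; exact hf i
    _ = ν i := Nat.div_add_mod' _ _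

end Degree

section Deformation

variable {ι A : Type*} [Fintype ι] [CommRing A] {m : ℕ} {f p : ι → MvPolynomial ι A}

/- Beyond degree `N (m - 1)` every monomial is a multiple of some `X k ^ m`, so surjectivity of
`digitMap m p` in degree `N (m - 1) + 1` writes every form of that degree as `∑ p k * g k`, and this
propagates to all higher degrees. -/
theorem homogeneousSubmodule_le_map_digitMap (hm : 0 < m) (hp : ∀ i, (p i).IsHomogeneous m)
    (h : ∀ e ≤ Fintype.card ι * (m - 1) + 1,
      homogeneousSubmodule ι A e ≤ (homogeneousSubmodule ι A e).map (digitMap m p)) (e : ℕ) :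
    homogeneousSubmodule ι A e ≤ (homogeneousSubmodule ι A e).map (digitMap m p) := by
  induction e using Nat.strong_induction_on with
  | _ e ih =>
  rcases le_or_gt e (Fintype.card ι * (m - 1) + 1) with he | he
  · exact h e he
  refine homogeneousSubmodule_le_iff.2 fun ν hν => ?_
  obtain ⟨κ, hκ_le, hκ⟩ := Finsupp.exists_le_degree_eq ν _ (he.le.trans hν.ge)
  obtain ⟨ρ, rfl⟩ := exists_add_of_le hκ_le
  obtain ⟨q, hq, hqκ⟩ := h _ le_rfl (isHomogeneous_monomial (1 : A) hκ)
  suffices h_mul : homogeneousSubmodule ι A (Fintype.card ι * (m - 1) + 1) ≤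
      ((homogeneousSubmodule ι A e).map (digitMap m p)).comap
        (LinearMap.mulLeft A (monomial ρ 1) ∘ₗ digitMap m p) by
    simpa [hqκ, monomial_mul, add_comm] using h_mul hq
  refine homogeneousSubmodule_le_iff.2 fun μ hμ => ?_
  obtain ⟨k, hk⟩ := exists_le_apply_of_lt_degree (m := m) (ν := μ) (by omega)
  obtain ⟨μ, rfl⟩ := exists_add_of_le (Finsupp.single_le_iff.2 hk)
  rw [map_add, Finsupp.degree_single] at hμ
  rw [map_add] at hν
  have h_lower : monomial ρ 1 * digitMap m p (monomial μ 1) ∈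
      homogeneousSubmodule ι A (ρ.degree + μ.degree) :=
    (isHomogeneous_monomial 1 rfl).mul (isHomogeneous_digitMap hp (isHomogeneous_monomial 1 rfl))
  obtain ⟨g, hg, hg_eq⟩ := ih (ρ.degree + μ.degree) (by omega) h_lower
  refine ⟨X k ^ m * g, ?_, ?_⟩
  · have := (isHomogeneous_X_pow (R := A) k m).mul hg
    rwa [show m + (ρ.degree + μ.degree) = e by omega] at this
  · rw [digitMap_X_pow_mul hm, hg_eq, LinearMap.comp_apply, LinearMap.mulLeft_apply,
      digitMap_monomial_single_add hm, mul_left_comm]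

theorem restrictTotalDegree_le_map_digitMap (hm : 0 < m) (hp : ∀ i, (p i).IsHomogeneous m)
    (h : ∀ e, homogeneousSubmodule ι A e ≤ (homogeneousSubmodule ι A e).map (digitMap m p))
    (hpf : ∀ i, (p i - f i).totalDegree < m) (e : ℕ) :
    restrictTotalDegree ι A e ≤ (restrictTotalDegree ι A e).map (digitMap m f) := by
  induction e using Nat.strong_induction_on with
  | _ e ih =>
  have h_lower : ∀ q : MvPolynomial ι A, q.totalDegree < e →
      ∃ g : MvPolynomial ι A, g.totalDegree ≤ q.totalDegree ∧ digitMap m f g = q := fun q hq => by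
    simpa only [Submodule.mem_map, mem_restrictTotalDegree] using
      ih _ hq ((mem_restrictTotalDegree _ _ _).2 le_rfl)
  refine restrictTotalDegree_le_iff.2 fun ν hν => ?_
  refine (h _).trans ?_ (isHomogeneous_monomial 1 rfl)
  rw [Submodule.map_le_iff_le_comap]
  refine homogeneousSubmodule_le_iff.2 fun μ hμ => ?_
  rw [Submodule.mem_comap]
  by_cases h_lt : ∀ i, μ i < m
  · rw [digitMap_monomial_of_lt _ h_lt, ← digitMap_monomial_of_lt f h_lt]
    exact Submodule.mem_map_of_mem (monomial_one_mem_restrictTotalDegree (hμ.trans_le hν))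
  · push Not at h_lt
    obtain ⟨k, hk⟩ := h_lt
    obtain ⟨μ, rfl⟩ := exists_add_of_le (Finsupp.single_le_iff.2 hk)
    rw [map_add, Finsupp.degree_single] at hμ
    set g := digitMap m p (monomial μ 1)
    have hg : g.totalDegree ≤ μ.degree :=
      (isHomogeneous_digitMap hp (isHomogeneous_monomial (1 : A) rfl)).totalDegree_le
    obtain ⟨g₁, hg₁, hg₁_eq⟩ := h_lower g (by omega)
    obtain ⟨g₂, hg₂, hg₂_eq⟩ := h_lower ((p k - f k) * g)
      ((totalDegree_mul _ _).trans_lt (by have := hpf k; omega))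
    refine ⟨X k ^ m * g₁ + g₂, (mem_restrictTotalDegree _ _ _).2 ?_, ?_⟩
    · have h₁ := (totalDegree_mul (X k ^ m) g₁).trans
        (add_le_add_left (isHomogeneous_X_pow (R := A) k m).totalDegree_le _)
      have h₂ := hg₂.trans (totalDegree_mul _ _)
      have := hpf k
      exact (totalDegree_add _ _).trans (max_le (by omega) (by omega))
    · rw [digitMap_monomial_single_add hm, map_add, digitMap_X_pow_mul hm, hg₁_eq, hg₂_eq]
      ring

theorem bijective_digitMap_of_restrictTotalDegree_le (hf : ∀ i, (f i).totalDegree ≤ m)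
    (h : ∀ e, restrictTotalDegree ι A e ≤ (restrictTotalDegree ι A e).map (digitMap m f)) :
    Function.Bijective (digitMap m f) := by
  have h_mem : ∀ q : MvPolynomial ι A, q ∈ restrictTotalDegree ι A q.totalDegree := fun q =>
    (mem_restrictTotalDegree _ _ _).2 le_rfl
  refine ⟨(injective_iff_map_eq_zero _).2 fun q hq => ?_, fun q => ?_⟩
  · have h_maps : ∀ g ∈ restrictTotalDegree ι A q.totalDegree,
        digitMap m f g ∈ restrictTotalDegree ι A q.totalDegree := fun g hg =>
      (mem_restrictTotalDegree _ _ _).2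
        ((totalDegree_digitMap_le hf g).trans ((mem_restrictTotalDegree _ _ _).1 hg))
    have h_surj : Function.Surjective ((digitMap m f).restrict h_maps) := fun ⟨g, hg⟩ => by
      obtain ⟨g', hg', rfl⟩ := h _ hg
      exact ⟨⟨g', hg'⟩, rfl⟩
    have h_inj := OrzechProperty.injective_of_surjective_endomorphism _ h_surj
    exact congrArg Subtype.val (@h_inj ⟨q, h_mem q⟩ 0 (Subtype.ext (by simpa using hq)))
  · obtain ⟨g, -, hg⟩ := h _ (h_mem q)
    exact ⟨g, hg⟩

end Deformation

section Determinant

/-- The exponents of the monomials of degree `e` in the variables indexed by `ι`. -/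
abbrev Exponent (ι : Type*) (e : ℕ) : Type _ := {μ : ι →₀ ℕ // (μ.sum fun _ d => d) = e}

theorem Exponent.degree_eq {ι : Type*} {e : ℕ} (μ : Exponent ι e) : μ.1.degree = e := μ.2

noncomputable instance {ι : Type*} [Finite ι] (e : ℕ) : Fintype (Exponent ι e) :=
  have : Finite (Exponent ι e) := (Finsupp.finite_of_degree_eq e).to_subtype
  Fintype.ofFinite _

variable {ι A B : Type*} [Fintype ι] [CommRing A] [CommRing B] {m : ℕ} {p : ι → MvPolynomial ι A}

/-- The matrix of `digitMap m p` on forms of degree `e`, with respect to the monomials, when the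
`p i` are forms of degree `m`. -/
noncomputable def digitMatrix (m : ℕ) (p : ι → MvPolynomial ι A) (e : ℕ) :
    Matrix (Exponent ι e) (Exponent ι e) A :=
  .of fun μ ν => coeff μ.1 (digitMap m p (monomial ν.1 1))

open scoped Classical in
/-- The product of the determinants of `digitMap m p` in the degrees up to `N (m - 1) + 1`, where
`N` is the number of variables. It plays the role of the resultant of the forms `p i`: when it
is a unit, `digitMap m p` is bijective in every degree. -/
noncomputable def digitDet (m : ℕ) (p : ι → MvPolynomial ι A) : A :=
  ∏ e ∈ Finset.range (Fintype.card ι * (m - 1) + 2), (digitMatrix m p e).det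

theorem digitMatrix_map (φ : A →+* B) (m : ℕ) (p : ι → MvPolynomial ι A) (e : ℕ) :
    digitMatrix m (fun i => map φ (p i)) e = (digitMatrix m p e).map φ := by
  ext μ ν
  rw [Matrix.map_apply, digitMatrix, digitMatrix, Matrix.of_apply, Matrix.of_apply, ← coeff_map,
    map_digitMap, map_monomial, φ.map_one]

theorem digitDet_map (φ : A →+* B) (m : ℕ) (p : ι → MvPolynomial ι A) :
    digitDet m (fun i => map φ (p i)) = φ (digitDet m p) := by
  simp only [digitDet, digitMatrix_map, map_prod, RingHom.map_det, RingHom.mapMatrix_apply]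

theorem digitDet_X_pow (m : ℕ) : digitDet m (fun i : ι => (X i ^ m : MvPolynomial ι A)) = 1 := by
  classical
  refine Finset.prod_eq_one fun e _ => ?_
  suffices h : digitMatrix m (fun i : ι => (X i ^ m : MvPolynomial ι A)) e = 1 by
    rw [h, Matrix.det_one]
  ext μ ν
  simp [digitMatrix, digitMap_X_pow, coeff_monomial, Matrix.one_apply, Subtype.ext_iff, eq_comm]

open scoped Classical in
theorem homogeneousSubmodule_le_map_digitMap_of_isUnit_det (hp : ∀ i, (p i).IsHomogeneous m)
    {e : ℕ} (h : IsUnit (digitMatrix m p e).det) :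
    homogeneousSubmodule ι A e ≤ (homogeneousSubmodule ι A e).map (digitMap m p) := by
  intro q hq
  obtain ⟨w, hw⟩ := Matrix.mulVec_surjective_iff_isUnit.2
    ((Matrix.isUnit_iff_isUnit_det _).2 h) fun μ => coeff μ.1 q
  have h_mem : ∑ μ, w μ • monomial μ.1 1 ∈ homogeneousSubmodule ι A e :=
    sum_mem fun μ _ => Submodule.smul_mem _ _ (isHomogeneous_monomial 1 μ.degree_eq)
  refine ⟨_, h_mem, ?_⟩
  ext κ
  by_cases hκ : κ.degree = e
  · have := congrFun hw ⟨κ, hκ⟩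
    simpa [Matrix.mulVec, dotProduct, digitMatrix, mul_comm, coeff_sum] using this
  · rw [(isHomogeneous_digitMap hp h_mem).coeff_eq_zero hκ, IsHomogeneous.coeff_eq_zero hq hκ]

theorem homogeneousSubmodule_le_map_digitMap_of_isUnit_digitDet (hm : 0 < m)
    (hp : ∀ i, (p i).IsHomogeneous m) (h : IsUnit (digitDet m p)) (e : ℕ) :
    homogeneousSubmodule ι A e ≤ (homogeneousSubmodule ι A e).map (digitMap m p) := by
  classical
  refine homogeneousSubmodule_le_map_digitMap hm hp (fun e he => ?_) e
  refine homogeneousSubmodule_le_map_digitMap_of_isUnit_det hp ?_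
  have h_dvd : (digitMatrix m p e).det ∣ digitDet m p :=
    Finset.dvd_prod_of_mem (fun e => (digitMatrix m p e).det)
      (Finset.mem_range.2 (Nat.lt_succ_of_le he))
  exact isUnit_of_dvd_unit h_dvd h

theorem bijective_digitMap (hm : 0 < m) (hp : ∀ i, (p i).IsHomogeneous m)
    (h : IsUnit (digitDet m p)) {f : ι → MvPolynomial ι A}
    (hpf : ∀ i, (p i - f i).totalDegree < m) : Function.Bijective (digitMap m f) := by
  refine bijective_digitMap_of_restrictTotalDegree_le (fun i => ?_)
    (restrictTotalDegree_le_map_digitMap hm hp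
      (homogeneousSubmodule_le_map_digitMap_of_isUnit_digitDet hm hp h) hpf)
  rw [← sub_sub_cancel (p i) (f i)]
  exact (totalDegree_sub _ _).trans (max_le (hp i).totalDegree_le (hpf i).le)

theorem eq_zero_of_eval_eq_zero [IsReduced A] (hm : 0 < m) (hp : ∀ i, (p i).IsHomogeneous m)
    (h : IsUnit (digitDet m p)) {w : ι → A} (hw : ∀ i, eval w (p i) = 0) : w = 0 := by
  funext k
  set e := Fintype.card ι * (m - 1) + 1
  obtain ⟨q, hq, hq_eq⟩ := homogeneousSubmodule_le_map_digitMap_of_isUnit_digitDet hm hp h e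
    (isHomogeneous_X_pow k e)
  suffices h_le : homogeneousSubmodule ι A e ≤
      LinearMap.ker ((aeval w).toLinearMap ∘ₗ digitMap m p) by
    have := h_le hq
    rw [LinearMap.mem_ker, LinearMap.comp_apply, hq_eq] at this
    exact eq_zero_of_pow_eq_zero (n := e) (by simpa [aeval_eq_eval] using this)
  refine homogeneousSubmodule_le_iff.2 fun μ hμ => ?_
  obtain ⟨i, hi⟩ := exists_le_apply_of_lt_degree (m := m) (ν := μ) (by omega)
  obtain ⟨μ, rfl⟩ := exists_add_of_le (Finsupp.single_le_iff.2 hi)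
  simp [digitMap_monomial_single_add hm, aeval_eq_eval, hw]

end Determinant

section QuotientBasis

variable {ι A : Type*} [Fintype ι] [CommRing A] {m : ℕ} {f : ι → MvPolynomial ι A}

/-- A tuple of digits, regarded as the exponent of a monomial of degree `< m` in each variable. -/
noncomputable def digitExponent (m : ℕ) (r : ι → Fin m) : ι →₀ ℕ :=
  Finsupp.equivFunOnFinite.symm fun i => r i

theorem digitExponent_lt (r : ι → Fin m) (i : ι) : digitExponent m r i < m :=
  (r i).isLt

theorem digitExponent_injective : Function.Injective (digitExponent (ι := ι) m) := fun _ _ h =>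
  funext fun i => Fin.ext (DFunLike.congr_fun h i)

theorem exists_digitExponent_eq {ν : ι →₀ ℕ} (hν : ∀ i, ν i < m) : ∃ r, digitExponent m r = ν :=
  ⟨fun i => ⟨ν i, hν i⟩, Finsupp.ext fun _ => rfl⟩

theorem exists_digitMap_eq_of_mem_span (hm : 0 < m) (h_surj : Function.Surjective (digitMap m f))
    {q : MvPolynomial ι A} (hq : q ∈ Ideal.span (Set.range f)) :
    ∃ g ∈ Ideal.span (Set.range fun i => X i ^ m), digitMap m f g = q := by
  obtain ⟨c, rfl⟩ := Ideal.mem_span_range_iff_exists_fun.1 hq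
  choose g hg using fun i => h_surj (c i)
  refine ⟨∑ i, g i * X i ^ m, Ideal.mem_span_range_iff_exists_fun.2 ⟨g, rfl⟩, ?_⟩
  rw [map_sum]
  exact Finset.sum_congr rfl fun i _ => by rw [mul_comm, digitMap_X_pow_mul hm, hg, mul_comm]

theorem linearIndependent_mk_monomial_digitExponent (hm : 0 < m)
    (hf : Function.Bijective (digitMap m f)) :
    LinearIndependent A fun r : ι → Fin m =>
      Ideal.Quotient.mk (Ideal.span (Set.range f)) (monomial (digitExponent m r) 1) := by
  classical
  refine Fintype.linearIndependent_iff.2 fun a ha r => ?_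
  set q : MvPolynomial ι A := ∑ r, a r • monomial (digitExponent m r) 1
  have hq_mem : q ∈ Ideal.span (Set.range f) := by
    rw [← Ideal.Quotient.eq_zero_iff_mem, ← ha, map_sum]
    rfl
  have hq : digitMap m f q = q := by
    simp only [q, map_sum, map_smul, digitMap_monomial_of_lt f (digitExponent_lt _)]
  obtain ⟨g, hg, hgq⟩ := exists_digitMap_eq_of_mem_span hm hf.2 hq_mem
  rw [← hq] at hgq
  rw [hf.1 hgq] at hg
  simpa [q, coeff_sum, coeff_monomial, digitExponent_injective.eq_iff] using
    coeff_eq_zero_of_mem_span_X_pow hg (digitExponent_lt r)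

theorem span_mk_monomial_digitExponent (hm : 0 < m) (hf : Function.Surjective (digitMap m f)) :
    Submodule.span A (Set.range fun r : ι → Fin m =>
      Ideal.Quotient.mk (Ideal.span (Set.range f)) (monomial (digitExponent m r) 1)) = ⊤ := by
  set mkₗ := (Ideal.Quotient.mkₐ A (Ideal.span (Set.range f))).toLinearMap
  refine eq_top_iff.2 ((LinearMap.range_eq_top.2
    ((Ideal.Quotient.mkₐ_surjective A _).comp hf) : LinearMap.range (mkₗ ∘ₗ digitMap m f) = ⊤) ▸ ?_)
  rw [LinearMap.range_eq_map, ← (basisMonomials ι A).span_eq, Submodule.map_span_le]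
  rintro _ ⟨ν, rfl⟩
  by_cases hν : ∀ i, ν i < m
  · obtain ⟨r, rfl⟩ := exists_digitExponent_eq hν
    refine Submodule.subset_span ⟨r, ?_⟩
    rw [coe_basisMonomials, LinearMap.comp_apply, digitMap_monomial_of_lt f hν]
    rfl
  · push Not at hν
    obtain ⟨k, hk⟩ := hν
    obtain ⟨ν, rfl⟩ := exists_add_of_le (Finsupp.single_le_iff.2 hk)
    rw [coe_basisMonomials, LinearMap.comp_apply, digitMap_monomial_single_add hm]
    suffices h : mkₗ (f k * digitMap m f (monomial ν 1)) = 0 by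
      rw [h]
      exact zero_mem _
    exact Ideal.Quotient.eq_zero_iff_mem.2
      (Ideal.mul_mem_right _ _ (Ideal.subset_span (Set.mem_range_self k)))

/-- The monomials of degree `< m` in each variable form a basis of the quotient by the `f i`. -/
noncomputable def quotientBasis (hm : 0 < m) (hf : Function.Bijective (digitMap m f)) :
    Module.Basis (ι → Fin m) A (MvPolynomial ι A ⧸ Ideal.span (Set.range f)) :=
  .mk (linearIndependent_mk_monomial_digitExponent hm hf)
    (span_mk_monomial_digitExponent hm hf.2).ge

theorem quotientBasis_apply (hm : 0 < m) (hf : Function.Bijective (digitMap m f))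
    (r : ι → Fin m) :
    quotientBasis hm hf r = Ideal.Quotient.mk _ (monomial (digitExponent m r) 1) :=
  Module.Basis.mk_apply _ _ r

end QuotientBasis

section FiniteAlgebra

open Polynomial in
/-- The discriminant of the characteristic polynomial, up to sign, written as a resultant with
degrees independent of the matrix so that it commutes with ring homomorphisms. -/
noncomputable def charpolyDisc {κ A : Type*} [Fintype κ] [DecidableEq κ] [CommRing A]
    (M : Matrix κ κ A) : A :=
  resultant M.charpoly (derivative M.charpoly) (Fintype.card κ) (Fintype.card κ - 1)

theorem charpolyDisc_map {κ A B : Type*} [Fintype κ] [DecidableEq κ] [CommRing A] [CommRing B]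
    (φ : A →+* B) (M : Matrix κ κ A) : charpolyDisc (M.map φ) = φ (charpolyDisc M) := by
  rw [charpolyDisc, Matrix.charpoly_map, Polynomial.derivative_map, Polynomial.resultant_map_map,
    charpolyDisc]

theorem charpolyDisc_ne_zero_iff {κ K : Type*} [Fintype κ] [DecidableEq κ] [Field K]
    (M : Matrix κ κ K) : charpolyDisc M ≠ 0 ↔ M.charpoly.Separable := by
  have h_deg : M.charpoly.natDegree = Fintype.card κ := M.charpoly_natDegree_eq_dim
  have h_le : M.charpoly.derivative.natDegree ≤ Fintype.card κ - 1 :=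
    h_deg ▸ Polynomial.natDegree_derivative_le _
  obtain ⟨k, hk⟩ := exists_add_of_le h_le
  rw [charpolyDisc, hk, Polynomial.resultant_add_right_deg _ _ _ _ _ le_rfl, ← h_deg,
    M.charpoly_monic.coeff_natDegree, one_pow, one_mul, ← isUnit_iff_ne_zero,
    Polynomial.isUnit_resultant_iff_isCoprime M.charpoly_monic]
  rfl

theorem leftMulMatrix_map {κ A B S T : Type*} [Fintype κ] [DecidableEq κ] [CommRing A]
    [CommRing B] [Ring S] [Ring T] [Algebra A S] [Algebra B T] (b : Module.Basis κ A S)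
    (c : Module.Basis κ B T) (φ : A →+* B) (ψ : S →+* T)
    (h_alg : ∀ a, ψ (algebraMap A S a) = algebraMap B T (φ a)) (h_basis : ∀ i, ψ (b i) = c i)
    (x : S) : Algebra.leftMulMatrix c (ψ x) = (Algebra.leftMulMatrix b x).map φ := by
  have h_repr : ∀ (s : S) (i : κ), c.repr (ψ s) i = φ (b.repr s i) := fun s i => by
    have h_sum : ψ s = ∑ j, φ (b.repr s j) • c j := by
      conv_lhs => rw [← b.sum_repr s]
      simp only [map_sum, Algebra.smul_def, map_mul, h_alg, h_basis]
    rw [h_sum, c.repr_sum_self]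
  ext i j
  simp only [Matrix.map_apply, Algebra.leftMulMatrix_eq_repr_mul, ← h_repr, map_mul, h_basis]

theorem exists_injective_algHom_apply {K S : Type*} [Field K] [Infinite K] [CommRing S]
    [Algebra K S] [Module.Finite K S] :
    ∃ x : S, Function.Injective fun χ : S →ₐ[K] K => χ x := by
  obtain ⟨x, hx⟩ := Module.Dual.exists_forall_ne_zero_of_forall_exists
    (fun χ : {χ : (S →ₐ[K] K) × (S →ₐ[K] K) // χ.1 ≠ χ.2} =>
      χ.1.1.toLinearMap - χ.1.2.toLinearMap) fun χ => by
        by_contra! h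
        exact χ.2 (AlgHom.ext fun y => sub_eq_zero.1 (h y))
  exact ⟨x, fun χ χ' h => by_contra fun h_ne => hx ⟨(χ, χ'), h_ne⟩ (sub_eq_zero.2 h)⟩

variable {K S : Type*} [Field K] [IsAlgClosed K] [CommRing S] [Algebra K S]

theorem exists_algHom_apply_eq_of_mem_spectrum [Module.Finite K S] {x : S} {c : K}
    (h : c ∈ spectrum K x) : ∃ χ : S →ₐ[K] K, χ x = c := by
  obtain ⟨M, hM, hxM⟩ := exists_max_ideal_of_mem_nonunits (spectrum.mem_iff.1 h)
  have : Field (S ⧸ M) := Ideal.Quotient.field M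
  let χ : (S ⧸ M) →ₐ[K] K := IsAlgClosed.lift
  refine ⟨χ.comp (Ideal.Quotient.mkₐ K M), ?_⟩
  have h_zero := congrArg χ (Ideal.Quotient.eq_zero_iff_mem.2 hxM)
  rw [map_sub, map_sub, map_zero, sub_eq_zero] at h_zero
  rw [AlgHom.comp_apply, Ideal.Quotient.mkₐ_eq_mk, ← h_zero]
  exact χ.commutes c

variable {κ : Type*} [Fintype κ] [DecidableEq κ] (b : Module.Basis κ K S)

theorem isRoot_charpoly_leftMulMatrix_iff {x : S} {c : K} :
    (Algebra.leftMulMatrix b x).charpoly.IsRoot c ↔ ∃ χ : S →ₐ[K] K, χ x = c := by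
  have : Module.Finite K S := .of_basis b
  rw [← Algebra.toMatrix_lmul_eq, LinearMap.charpoly_toMatrix,
    ← Module.End.hasEigenvalue_iff_isRoot_charpoly, Module.End.hasEigenvalue_iff_mem_spectrum]
  have h_spec : spectrum K (LinearMap.mulLeft K x) = spectrum K x := by
    ext a
    rw [spectrum.mem_iff, spectrum.mem_iff, ← Algebra.lmul_isUnit_iff (R := K) (A := S), map_sub,
      AlgHom.commutes]
    rfl
  rw [h_spec]
  refine ⟨exists_algHom_apply_eq_of_mem_spectrum, ?_⟩
  rintro ⟨χ, rfl⟩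
  exact AlgHom.apply_mem_spectrum χ x

theorem range_algHom_apply [DecidableEq K] (x : S) :
    Set.range (fun χ : S →ₐ[K] K => χ x) =
      (Algebra.leftMulMatrix b x).charpoly.roots.toFinset := by
  ext c
  rw [Set.mem_range, ← isRoot_charpoly_leftMulMatrix_iff b, Finset.mem_coe, Multiset.mem_toFinset,
    Polynomial.mem_roots (Matrix.charpoly_monic _).ne_zero]

theorem card_roots_charpoly_leftMulMatrix (x : S) :
    (Algebra.leftMulMatrix b x).charpoly.roots.card = Fintype.card κ := by
  rw [← (IsAlgClosed.splits _).natDegree_eq_card_roots, Matrix.charpoly_natDegree_eq_dim]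

theorem card_algHom_eq_of_separable_charpoly {x : S}
    (hx : (Algebra.leftMulMatrix b x).charpoly.Separable) :
    Nat.card (S →ₐ[K] K) = Fintype.card κ := by
  classical
  have : Module.Finite K S := .of_basis b
  refine le_antisymm ?_ ?_
  · rw [← Module.finrank_eq_card_basis b]
    exact card_algHom_le_finrank K S K
  · rw [← card_roots_charpoly_leftMulMatrix b x,
      ← Multiset.toFinset_card_of_nodup (Polynomial.nodup_roots hx), ← Set.ncard_coe_finset,
      ← range_algHom_apply b]
    exact Finite.card_range_le _

theorem exists_separable_charpoly_of_card_algHom_eq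
    (h : Nat.card (S →ₐ[K] K) = Fintype.card κ) :
    ∃ x : S, (Algebra.leftMulMatrix b x).charpoly.Separable := by
  classical
  have : Module.Finite K S := .of_basis b
  obtain ⟨x, hx⟩ := exists_injective_algHom_apply (K := K) (S := S)
  refine ⟨x, (Polynomial.nodup_roots_iff_of_splits (Matrix.charpoly_monic _).ne_zero
    (IsAlgClosed.splits _)).1 (Multiset.toFinset_card_eq_card_iff_nodup.1 ?_)⟩
  rw [card_roots_charpoly_leftMulMatrix, ← Set.ncard_coe_finset, ← range_algHom_apply, ← h]
  exact Nat.card_range_of_injective hx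

end FiniteAlgebra

section FixedPoints

section CommRing

variable {ι A B : Type*} [CommRing A] [CommRing B] {m : ℕ}

theorem aeval_eq_zero_of_mem_span {σ : Type*} {f : σ → MvPolynomial ι A} {z : ι → A}
    (hz : ∀ i, eval z (f i) = 0) {q : MvPolynomial ι A} (hq : q ∈ Ideal.span (Set.range f)) :
    aeval z q = 0 := by
  suffices h : Ideal.span (Set.range f) ≤ RingHom.ker (aeval (R := A) z) from h hq
  rw [Ideal.span_le]
  rintro _ ⟨i, rfl⟩
  exact hz i

theorem algHom_apply_mk {I : Ideal (MvPolynomial ι A)} (χ : (MvPolynomial ι A ⧸ I) →ₐ[A] A)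
    (q : MvPolynomial ι A) :
    χ (Ideal.Quotient.mk I q) = eval (fun i => χ (Ideal.Quotient.mk I (X i))) q := by
  have h_comp : χ.comp (Ideal.Quotient.mkₐ A I) = aeval fun i => χ (Ideal.Quotient.mk I (X i)) :=
    algHom_ext fun i => by simp
  exact DFunLike.congr_fun h_comp q

/-- The points of an affine scheme over `A` with coordinates in `A` are the zeros of its
equations. -/
noncomputable def zerosEquivAlgHom {σ : Type*} (f : σ → MvPolynomial ι A) :
    {z : ι → A // ∀ i, eval z (f i) = 0} ≃
      (MvPolynomial ι A ⧸ Ideal.span (Set.range f) →ₐ[A] A) where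
  toFun z := Ideal.Quotient.liftₐ _ (aeval z.1) fun _ => aeval_eq_zero_of_mem_span z.2
  invFun χ := ⟨fun i => χ (Ideal.Quotient.mk _ (X i)), fun i => by
    rw [← algHom_apply_mk, Ideal.Quotient.eq_zero_iff_mem.2
      (Ideal.subset_span (Set.mem_range_self i)), map_zero]⟩
  left_inv z := by
    ext i
    simp
  right_inv χ := by
    ext q
    obtain ⟨q, rfl⟩ := Ideal.Quotient.mk_surjective q
    simp [algHom_apply_mk χ q]

/-- The fixed points of the polynomial map with components `P i`. -/
def fixedPoints (P : ι → MvPolynomial ι A) : Set (ι → A) :=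
  {z | ∀ i, eval z (P i) = z i}

/-- The coordinate ring of the scheme of fixed points of the polynomial map with components
`P i`. -/
abbrev FixedPointAlgebra (P : ι → MvPolynomial ι A) : Type _ :=
  MvPolynomial ι A ⧸ Ideal.span (Set.range fun i => P i - X i)

theorem card_fixedPoints (P : ι → MvPolynomial ι A) :
    Nat.card (fixedPoints P) = Nat.card (FixedPointAlgebra P →ₐ[A] A) := by
  rw [← Nat.card_congr (zerosEquivAlgHom fun i => P i - X i)]
  simp only [fixedPoints, map_sub, eval_X, sub_eq_zero]
  rfl

/-- Base change of the ring of fixed points along `φ`. -/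
noncomputable def FixedPointAlgebra.map (φ : A →+* B) (P : ι → MvPolynomial ι A) :
    FixedPointAlgebra P →+* FixedPointAlgebra fun i => MvPolynomial.map φ (P i) :=
  Ideal.quotientMap _ (MvPolynomial.map φ) <| by
    rw [Ideal.span_le]
    rintro _ ⟨i, rfl⟩
    exact Ideal.subset_span ⟨i, by simp⟩

theorem FixedPointAlgebra.map_mk (φ : A →+* B) (P : ι → MvPolynomial ι A)
    (q : MvPolynomial ι A) :
    map φ P (Ideal.Quotient.mk _ q) = Ideal.Quotient.mk _ (MvPolynomial.map φ q) :=
  Ideal.quotientMap_mk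

theorem FixedPointAlgebra.map_surjective {φ : A →+* B} (hφ : Function.Surjective φ)
    (P : ι → MvPolynomial ι A) : Function.Surjective (map φ P) :=
  Ideal.quotientMap_surjective (MvPolynomial.map_surjective φ hφ)

variable [Fintype ι] {P : ι → MvPolynomial ι A}

theorem bijective_digitMap_sub_X (hm : 2 ≤ m) (hP : ∀ i, (P i).IsHomogeneous m)
    (h : IsUnit (digitDet m P)) : Function.Bijective (digitMap m fun i => P i - X i) := by
  refine bijective_digitMap (by omega) hP h fun i => ?_
  rw [sub_sub_cancel]
  exact (isHomogeneous_X A i).totalDegree_le.trans_lt hm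

/-- The discriminant of multiplication by `x` on the ring of fixed points of `P`, which is free with
the monomials of degree `< m` in each variable as basis. -/
noncomputable def fixedPointDisc (hm : 2 ≤ m) (hP : ∀ i, (P i).IsHomogeneous m)
    (h : IsUnit (digitDet m P)) (x : FixedPointAlgebra P) : A :=
  open scoped Classical in
  charpolyDisc (Algebra.leftMulMatrix
    (quotientBasis (by omega) (bijective_digitMap_sub_X hm hP h)) x)

theorem fixedPointDisc_map (hm : 2 ≤ m) (hP : ∀ i, (P i).IsHomogeneous m)
    (h : IsUnit (digitDet m P)) (φ : A →+* B) (x : FixedPointAlgebra P) :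
    fixedPointDisc hm (fun i => (hP i).map φ) (digitDet_map φ m P ▸ h.map φ)
      (FixedPointAlgebra.map φ P x) = φ (fixedPointDisc hm hP h x) := by
  classical
  rw [fixedPointDisc, fixedPointDisc, ← charpolyDisc_map, leftMulMatrix_map _ _ φ]
  · exact fun a => (FixedPointAlgebra.map_mk φ P (C a)).trans (by rw [map_C]; rfl)
  · exact fun r => by
      rw [quotientBasis_apply, quotientBasis_apply, FixedPointAlgebra.map_mk, map_monomial, map_one]

end CommRing

section IsAlgClosed

variable {ι K : Type*} [Fintype ι] [Field K] [IsAlgClosed K] {m : ℕ}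

theorem card_fixedPoints_eq_iff {P : ι → MvPolynomial ι K} (hm : 2 ≤ m)
    (hP : ∀ i, (P i).IsHomogeneous m) (h : IsUnit (digitDet m P)) :
    Nat.card (fixedPoints P) = m ^ Fintype.card ι ↔ ∃ x, fixedPointDisc hm hP h x ≠ 0 := by
  classical
  have h_card : Fintype.card (ι → Fin m) = m ^ Fintype.card ι := by simp
  simp only [fixedPointDisc, charpolyDisc_ne_zero_iff, card_fixedPoints, ← h_card]
  exact ⟨exists_separable_charpoly_of_card_algHom_eq _,
    fun ⟨_, hx⟩ => card_algHom_eq_of_separable_charpoly _ hx⟩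

theorem exists_forall_card_fixedPoints_eq_of_isUnit {A : Type*} [CommRing A]
    {P : ι → MvPolynomial ι A} (hm : 2 ≤ m) (hP : ∀ i, (P i).IsHomogeneous m)
    (h : IsUnit (digitDet m P)) {φ₀ : A →+* K} (hφ₀ : Function.Surjective φ₀)
    (h_card : Nat.card (fixedPoints fun i => map φ₀ (P i)) = m ^ Fintype.card ι) :
    ∃ Δ : A, φ₀ Δ ≠ 0 ∧ ∀ φ : A →+* K, φ Δ ≠ 0 →
      Nat.card (fixedPoints fun i => map φ (P i)) = m ^ Fintype.card ι := by
  have h_iff := fun φ : A →+* K => card_fixedPoints_eq_iff hm (fun i => (hP i).map φ)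
    (digitDet_map φ m P ▸ h.map φ)
  obtain ⟨x, hx⟩ := (h_iff φ₀).1 h_card
  obtain ⟨y, rfl⟩ := FixedPointAlgebra.map_surjective hφ₀ P x
  rw [fixedPointDisc_map hm hP h] at hx
  exact ⟨fixedPointDisc hm hP h y, hx, fun φ hφ => (h_iff φ).2 ⟨FixedPointAlgebra.map φ P y, by
    rwa [fixedPointDisc_map hm hP h]⟩⟩

theorem exists_forall_card_fixedPoints_eq {R : Type*} [CommRing R]
    {P : ι → MvPolynomial ι R} (hm : 2 ≤ m) (hP : ∀ i, (P i).IsHomogeneous m)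
    {φ₀ : R →+* K} (hφ₀ : Function.Surjective φ₀) (h_det : φ₀ (digitDet m P) ≠ 0)
    (h_card : Nat.card (fixedPoints fun i => map φ₀ (P i)) = m ^ Fintype.card ι) :
    ∃ D : R, φ₀ D ≠ 0 ∧ ∀ φ : R →+* K, φ D ≠ 0 → φ (digitDet m P) ≠ 0 ∧
      Nat.card (fixedPoints fun i => map φ (P i)) = m ^ Fintype.card ι := by
  set δ := digitDet m P
  set A := Localization.Away δ
  have h_unit : IsUnit (digitDet m fun i => map (algebraMap R A) (P i)) := by
    rw [digitDet_map]
    exact IsLocalization.Away.algebraMap_isUnit δ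
  have h_lift : ∀ φ : R →+* K, φ δ ≠ 0 → ∃ φ' : A →+* K, φ'.comp (algebraMap R A) = φ :=
    fun φ hφ => ⟨IsLocalization.Away.lift δ hφ.isUnit, IsLocalization.Away.lift_comp δ _⟩
  obtain ⟨φ₀', hφ₀'⟩ := h_lift φ₀ h_det
  have h_map : ∀ {φ : R →+* K} {φ' : A →+* K}, φ'.comp (algebraMap R A) = φ →
      (fun i => map φ' (map (algebraMap R A) (P i))) = fun i => map φ (P i) := by
    rintro _ φ' rfl
    simp only [map_map]
  have hφ₀'_surj : Function.Surjective φ₀' :=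
    .of_comp (g := algebraMap R A) (by rwa [← RingHom.coe_comp, hφ₀'])
  obtain ⟨Δ, hΔ₀, hΔ⟩ := exists_forall_card_fixedPoints_eq_of_isUnit hm
    (fun i => (hP i).map (algebraMap R A)) h_unit hφ₀'_surj (by rwa [h_map hφ₀'])
  obtain ⟨k, r, hr⟩ := IsLocalization.Away.surj δ Δ
  have h_numerator : ∀ {φ : R →+* K} {φ' : A →+* K}, φ'.comp (algebraMap R A) = φ →
      φ r = φ' Δ * φ δ ^ k := by
    rintro _ φ' rfl
    simpa using (congrArg φ' hr).symm
  refine ⟨δ * r, ?_, fun φ hφ => ?_⟩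
  · rw [map_mul, h_numerator hφ₀']
    exact mul_ne_zero h_det (mul_ne_zero hΔ₀ (pow_ne_zero k h_det))
  · rw [map_mul] at hφ
    obtain ⟨φ', hφ'⟩ := h_lift φ (left_ne_zero_of_mul hφ)
    rw [h_numerator hφ'] at hφ
    refine ⟨left_ne_zero_of_mul hφ, ?_⟩
    rw [← h_map hφ']
    exact hΔ φ' (left_ne_zero_of_mul (right_ne_zero_of_mul hφ))

end IsAlgClosed

end FixedPoints

section Eigenlines

open scoped LinearAlgebra.Projectivization

section Field

variable {ι K : Type*} [Field K] {m : ℕ} {p : ι → MvPolynomial ι K}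

/-- The eigenvector lines of the polynomial map with components `p k`, as points of the projective
space. For homogeneous `p k` of the same degree any representative can be used in place of
`ℓ.rep`. -/
def eigenlines (p : ι → MvPolynomial ι K) : Set (ℙ K (ι → K)) :=
  {ℓ | ∃ lam : K, (fun k => eval ℓ.rep (p k)) = lam • ℓ.rep}

theorem eval_smul_of_isHomogeneous {R : Type*} [CommSemiring R] {q : MvPolynomial ι R}
    (hq : q.IsHomogeneous m) (t : R) (w : ι → R) : eval (t • w) q = t ^ m * eval w q := by
  rw [eval_eq, eval_eq, Finset.mul_sum]
  refine Finset.sum_congr rfl fun d hd => ?_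
  have h_degree : ∑ i ∈ d.support, d i = m := by
    rw [← hq (mem_support_iff.1 hd), Finsupp.weight_apply]
    simp [Finsupp.sum]
  simp only [Pi.smul_apply, smul_eq_mul, mul_pow, Finset.prod_mul_distrib,
    Finset.prod_pow_eq_pow_sum, h_degree]
  ring

theorem mem_rootsOfUnity_sub_one_iff (hm : 1 ≤ m) (s : Kˣ) :
    s ∈ rootsOfUnity (m - 1) K ↔ (s : K) ^ m = s := by
  rw [mem_rootsOfUnity', ← mul_left_inj' s.ne_zero, pow_sub_one_mul (by omega), one_mul]

theorem smul_mem_fixedPoints_iff (hm : 1 ≤ m) (hp : ∀ k, (p k).IsHomogeneous m) {z : ι → K}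
    (hz : z ∈ fixedPoints p) (hz₀ : z ≠ 0) (s : Kˣ) :
    s • z ∈ fixedPoints p ↔ s ∈ rootsOfUnity (m - 1) K := by
  obtain ⟨k, hk⟩ := Function.ne_iff.1 hz₀
  simp only [mem_rootsOfUnity_sub_one_iff hm, fixedPoints, Set.mem_ofPred_eq, Units.smul_def,
    eval_smul_of_isHomogeneous (hp _), hz _, Pi.smul_apply, smul_eq_mul]
  exact ⟨fun h => mul_right_cancel₀ hk (h k), fun h i => by rw [h]⟩

theorem exists_eval_smul_eq (hp : ∀ k, (p k).IsHomogeneous m) {w : ι → K} (s : Kˣ)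
    (hw : ∃ lam : K, (fun k => eval w (p k)) = lam • w) :
    ∃ lam : K, (fun k => eval (s • w) (p k)) = lam • s • w := by
  obtain ⟨lam, hlam⟩ := hw
  refine ⟨s ^ m * lam * s⁻¹, funext fun k => ?_⟩
  have hlam_k : eval w (p k) = lam * w k := congrFun hlam k
  rw [Units.smul_def, eval_smul_of_isHomogeneous (hp k), hlam_k]
  simp [mul_assoc]

theorem mk_mem_eigenlines_iff (hp : ∀ k, (p k).IsHomogeneous m) {w : ι → K} (hw : w ≠ 0) :
    Projectivization.mk K w hw ∈ eigenlines p ↔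
      ∃ lam : K, (fun k => eval w (p k)) = lam • w := by
  obtain ⟨s, hs⟩ := Projectivization.exists_smul_eq_mk_rep K w hw
  rw [eigenlines, Set.mem_ofPred_eq, ← hs]
  refine ⟨fun h => ?_, exists_eval_smul_eq hp s⟩
  simpa using exists_eval_smul_eq hp s⁻¹ h

theorem exists_enumeration_eigenlines (hp : ∀ k, (p k).IsHomogeneous m)
    (h_fin : (eigenlines p).Finite) {N : ℕ} (h_card : (eigenlines p).ncard = N) :
    ∃ v : Fin N → ι → K,
      (∀ i, v i ≠ 0) ∧
      (∀ i j, i ≠ j → ∀ lam : K, v i ≠ lam • v j) ∧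
      (∀ i, ∃ lam : K, (fun k => eval (v i) (p k)) = lam • v i) ∧
      (∀ w : ι → K, w ≠ 0 → (∃ lam : K, (fun k => eval w (p k)) = lam • w) →
        ∃ i, ∃ mu : K, w = mu • v i) := by
  have := h_fin.to_subtype
  let ℓ : Fin N ≃ eigenlines p := (Finite.equivFinOfCardEq h_card).symm
  refine ⟨fun i => (ℓ i).1.rep, fun i => (ℓ i).1.rep_nonzero, fun i j hij lam h => hij ?_,
    fun i => (ℓ i).2, fun w hw h => ?_⟩
  · apply ℓ.injective
    rw [Subtype.ext_iff, ← (ℓ i).1.mk_rep, ← (ℓ j).1.mk_rep, Projectivization.mk_eq_mk_iff']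
    exact ⟨lam, h.symm⟩
  · obtain ⟨s, hs⟩ := Projectivization.exists_smul_eq_mk_rep K w hw
    refine ⟨ℓ.symm ⟨_, (mk_mem_eigenlines_iff hp hw).2 h⟩, (s⁻¹ : Kˣ), ?_⟩
    simp only [Equiv.apply_symm_apply]
    rw [← hs, ← Units.smul_def, inv_smul_smul]

end Field

section IsAlgClosed

variable {ι K : Type*} [Field K] [IsAlgClosed K] {m : ℕ} {p : ι → MvPolynomial ι K}

theorem exists_units_smul_mem_fixedPoints (hm : 2 ≤ m) (hp : ∀ k, (p k).IsHomogeneous m)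
    {w : ι → K} {lam : K} (hlam : lam ≠ 0) (hw : (fun k => eval w (p k)) = lam • w) :
    ∃ s : Kˣ, s • w ∈ fixedPoints p := by
  obtain ⟨s, hs⟩ := IsAlgClosed.exists_pow_nat_eq lam⁻¹ (n := m - 1) (by omega)
  have hs₀ : s ≠ 0 := by
    rintro rfl
    exact inv_ne_zero hlam (by rw [← hs, zero_pow (by omega)])
  refine ⟨Units.mk0 s hs₀, fun k => ?_⟩
  have hw_k : eval w (p k) = lam * w k := congrFun hw k
  rw [Units.smul_mk0, eval_smul_of_isHomogeneous (hp k), hw_k, ← pow_sub_one_mul (by omega), hs,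
    Pi.smul_apply, smul_eq_mul]
  field_simp

theorem exists_mem_fixedPoints_mk_eq (hm : 2 ≤ m) (hp : ∀ k, (p k).IsHomogeneous m)
    (hp₀ : ∀ w : ι → K, (∀ k, eval w (p k) = 0) → w = 0) {ℓ : ℙ K (ι → K)}
    (hℓ : ℓ ∈ eigenlines p) :
    ∃ z ∈ fixedPoints p, ∃ hz : z ≠ 0, Projectivization.mk K z hz = ℓ := by
  obtain ⟨lam, hlam⟩ := hℓ
  have hlam₀ : lam ≠ 0 := by
    rintro rfl
    exact ℓ.rep_nonzero (hp₀ _ fun k => by simpa using congrFun hlam k)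
  obtain ⟨s, hs⟩ := exists_units_smul_mem_fixedPoints hm hp hlam₀ hlam
  have h_ne : s • ℓ.rep ≠ 0 := (smul_ne_zero_iff_ne s).2 ℓ.rep_nonzero
  exact ⟨_, hs, h_ne, (Projectivization.mk_eq_mk_iff K _ _ h_ne ℓ.rep_nonzero).2 ⟨s, rfl⟩
    |>.trans ℓ.mk_rep⟩

theorem nonempty_eigenlines_prod_rootsOfUnity_equiv (hm : 2 ≤ m)
    (hp : ∀ k, (p k).IsHomogeneous m) (hp₀ : ∀ w : ι → K, (∀ k, eval w (p k) = 0) → w = 0) :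
    Nonempty (eigenlines p × rootsOfUnity (m - 1) K ≃ (fixedPoints p \ {0} : Set (ι → K))) := by
  choose z hz hz₀ hz_mk using fun ℓ : eigenlines p => exists_mem_fixedPoints_mk_eq hm hp hp₀ ℓ.2
  let f : eigenlines p × rootsOfUnity (m - 1) K → (fixedPoints p \ {0} : Set (ι → K)) :=
    fun x => ⟨(x.2 : Kˣ) • z x.1,
      (smul_mem_fixedPoints_iff (by omega) hp (hz x.1) (hz₀ x.1) _).2 x.2.2,
      (smul_ne_zero_iff_ne _).2 (hz₀ x.1)⟩
  refine ⟨.ofBijective f ⟨fun ⟨ℓ, s⟩ ⟨ℓ', s'⟩ h => ?_, fun ⟨w, hw, hw₀⟩ => ?_⟩⟩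
  · have h_smul : (s : Kˣ) • z ℓ = (s' : Kˣ) • z ℓ' := congrArg Subtype.val h
    obtain rfl : ℓ = ℓ' := by
      rw [Subtype.ext_iff, ← hz_mk, ← hz_mk, Projectivization.mk_eq_mk_iff]
      exact ⟨(s : Kˣ)⁻¹ * s', by rw [mul_smul, ← h_smul, inv_smul_smul]⟩
    have h_val : ((s : Kˣ) : K) = (s' : Kˣ) := smul_left_injective K (hz₀ ℓ) h_smul
    rw [Subtype.ext (Units.ext h_val)]
  · have h_mem : Projectivization.mk K w hw₀ ∈ eigenlines p :=
      (mk_mem_eigenlines_iff hp hw₀).2 ⟨1, by rw [one_smul]; exact funext hw⟩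
    obtain ⟨s, hs⟩ := (Projectivization.mk_eq_mk_iff K _ _ hw₀ (hz₀ _)).1 (hz_mk ⟨_, h_mem⟩).symm
    have hs_root : s ∈ rootsOfUnity (m - 1) K := by
      rwa [← smul_mem_fixedPoints_iff (by omega) hp (hz _) (hz₀ _), hs]
    exact ⟨(⟨_, h_mem⟩, ⟨s, hs_root⟩), Subtype.ext hs⟩

theorem card_rootsOfUnity_sub_one (hm : 1 ≤ m) (hmK : (m : K) ≠ 1) :
    Nat.card (rootsOfUnity (m - 1) K) = m - 1 := by
  have : NeZero ((m - 1 : ℕ) : K) := ⟨by rwa [Nat.cast_sub hm, Nat.cast_one, sub_ne_zero]⟩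
  have : NeZero (m - 1) := .of_neZero_natCast K
  exact HasEnoughRootsOfUnity.natCard_rootsOfUnity K (m - 1)

theorem finite_eigenlines_and_ncard_eq (hm : 2 ≤ m) (hmK : (m : K) ≠ 1)
    (hp : ∀ k, (p k).IsHomogeneous m) (hp₀ : ∀ w : ι → K, (∀ k, eval w (p k) = 0) → w = 0)
    {N : ℕ} (h_card : Nat.card (fixedPoints p) = m ^ N) :
    (eigenlines p).Finite ∧ (eigenlines p).ncard = ∑ i ∈ Finset.range N, m ^ i := by
  obtain ⟨e⟩ := nonempty_eigenlines_prod_rootsOfUnity_equiv hm hp hp₀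
  have h_fin : (fixedPoints p).Finite :=
    Set.finite_of_ncard_ne_zero (h_card.trans_ne (pow_ne_zero N (by omega)))
  have h_zero : 0 ∈ fixedPoints p := fun k => by
    rw [Pi.zero_apply, ← zero_smul K (0 : ι → K), eval_smul_of_isHomogeneous (hp k),
      zero_pow (by omega), zero_mul]
  have h_mul : (eigenlines p).ncard * (m - 1) + 1 = m ^ N := by
    rw [← card_rootsOfUnity_sub_one (by omega) hmK, ← Nat.card_coe_set_eq, ← Nat.card_prod,
      Nat.card_congr e, Nat.card_coe_set_eq, Set.ncard_sdiff_singleton_add_one h_zero h_fin]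
    exact h_card
  have h_geom : (∑ i ∈ Finset.range N, m ^ i) * (m - 1) + 1 = m ^ N := by
    have h := geom_sum_mul_add (m - 1) N
    rwa [Nat.sub_add_cancel (by omega)] at h
  have := (h_fin.sdiff (t := {0})).to_subtype
  have := Finite.of_equiv _ e.symm
  exact ⟨Finite.prod_left (rootsOfUnity (m - 1) K),
    Nat.eq_of_mul_eq_mul_right (by omega) (Nat.succ.inj (h_mul.trans h_geom.symm))⟩

theorem ncard_setOf_pow_eq_self (hm : 2 ≤ m) (hmK : (m : K) ≠ 1) :
    {s : K | s ^ m = s}.ncard = m := by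
  have : NeZero (m - 1) := ⟨by omega⟩
  have h_eq : {s : K | s ^ m = s} =
      insert 0 ((fun s : Kˣ => (s : K)) '' rootsOfUnity (m - 1) K) := by
    ext s
    rcases eq_or_ne s 0 with rfl | hs
    · simp [show m ≠ 0 by omega]
    · lift s to Kˣ using hs.isUnit
      rw [Set.mem_ofPred_eq, Set.mem_insert_iff, or_iff_right hs,
        Units.val_injective.mem_set_image, SetLike.mem_coe,
        mem_rootsOfUnity_sub_one_iff (by omega)]
  have h_ncard : ((fun s : Kˣ => (s : K)) '' rootsOfUnity (m - 1) K).ncard = m - 1 :=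
    (Set.ncard_image_of_injective _ Units.val_injective).trans
      (card_rootsOfUnity_sub_one (by omega) hmK)
  have h_notMem : (0 : K) ∉ (fun s : Kˣ => (s : K)) '' rootsOfUnity (m - 1) K :=
    fun ⟨s, _, hs⟩ => s.ne_zero hs
  rw [h_eq, Set.ncard_insert_of_notMem h_notMem (Set.finite_of_ncard_ne_zero (by omega)),
    h_ncard]
  omega

theorem card_fixedPoints_X_pow [Fintype ι] (hm : 2 ≤ m) (hmK : (m : K) ≠ 1) :
    Nat.card (fixedPoints fun i : ι => (X i ^ m : MvPolynomial ι K)) = m ^ Fintype.card ι := by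
  have h_eq : fixedPoints (fun i : ι => (X i ^ m : MvPolynomial ι K)) =
      {z | ∀ i, z i ∈ {s : K | s ^ m = s}} := by
    simp [fixedPoints]
  rw [h_eq]
  refine (Nat.card_congr Equiv.subtypePiEquivPi).trans ?_
  rw [Nat.card_pi, Finset.prod_const, Finset.card_univ]
  exact congrArg (· ^ _) (ncard_setOf_pow_eq_self hm hmK)

end IsAlgClosed

end Eigenlines

section GenericForm

variable {ι K : Type*} [Finite ι] [CommSemiring K] {m : ℕ}

/-- The form of degree `m` whose coefficients are the indeterminates `X (k, μ)`. -/
noncomputable def genericForm (m : ℕ) (k : ι) :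
    MvPolynomial ι (MvPolynomial (ι × Exponent ι m) K) :=
  ∑ μ : Exponent ι m, monomial μ.1 (X (k, μ))

theorem isHomogeneous_genericForm (m : ℕ) (k : ι) :
    (genericForm (K := K) m k).IsHomogeneous m :=
  .sum _ _ _ fun μ _ => isHomogeneous_monomial _ μ.degree_eq

theorem map_genericForm {p : ι → MvPolynomial ι K} (hp : ∀ k, (p k).IsHomogeneous m) (k : ι) :
    map (eval fun q : ι × Exponent ι m => coeff q.2.1 (p q.1)) (genericForm m k) = p k := by
  classical
  simp only [genericForm, map_sum, map_monomial, eval_X]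
  ext μ
  simp only [coeff_sum, coeff_monomial]
  by_cases hμ : μ.degree = m
  · rw [Finset.sum_eq_single_of_mem (⟨μ, hμ⟩ : Exponent ι m) (Finset.mem_univ _) fun ν _ hν =>
      if_neg fun h => hν (Subtype.ext h), if_pos rfl]
  · rw [(hp k).coeff_eq_zero hμ]
    exact Finset.sum_eq_zero fun ν _ => if_neg fun h : ν.1 = μ => hμ (h ▸ ν.degree_eq)

end GenericForm

end TensorEigenvectors

open TensorEigenvectors

theorem statement8_general {ι K : Type*} [Fintype ι] [Field K] [IsAlgClosed K] {m : ℕ}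
    (hm : 2 ≤ m) (hmK : (m : K) ≠ 1) :
    ∃ D : MvPolynomial (ι × {μ : ι →₀ ℕ // (μ.sum fun _ e => e) = m}) K,
      D ≠ 0 ∧
      ∀ p : ι → MvPolynomial ι K, (∀ k, (p k).IsHomogeneous m) →
        eval (fun q => coeff q.2.1 (p q.1)) D ≠ 0 →
        (eigenlines p).Finite ∧
          (eigenlines p).ncard = ∑ i ∈ Finset.range (Fintype.card ι), m ^ i := by
  have h_pow : ∀ k : ι, (X k ^ m : MvPolynomial ι K).IsHomogeneous m :=
    fun k => isHomogeneous_X_pow k m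
  obtain ⟨D, hD₀, hD⟩ := exists_forall_card_fixedPoints_eq hm (isHomogeneous_genericForm m)
    (φ₀ := eval fun q : ι × Exponent ι m => coeff q.2.1 (X q.1 ^ m : MvPolynomial ι K))
    (fun a => ⟨C a, eval_C a⟩)
    (by simp only [← digitDet_map, map_genericForm h_pow, digitDet_X_pow, ne_eq, one_ne_zero,
      not_false_eq_true])
    (by simpa only [map_genericForm h_pow] using card_fixedPoints_X_pow hm hmK)
  refine ⟨D, fun h => hD₀ (by rw [h, map_zero]), fun p hp hDp => ?_⟩
  obtain ⟨h_det, h_card⟩ := hD _ hDp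
  simp only [← digitDet_map, map_genericForm hp] at h_det h_card
  exact finite_eigenlines_and_ncard_eq hm hmK hp
    (fun w hw => eq_zero_of_eval_eq_zero (by omega) hp h_det.isUnit hw) h_card

/-- **Cartwright–Sturmfels count** (Proposition 6.1): a general tensor
`M ∈ Hom(S^mℂ^{n+1}, ℂ^{n+1})`, represented by its component polynomials
`p_0,…,p_n` homogeneous of degree `m` (`M(v^m) = (p_0(v),…,p_n(v))`), has exactly
`(m^{n+1} − 1)/(m − 1) = Σ_{i=0}^n m^i` eigenvector lines. -/
theorem statement8 (n m : ℕ) (hn : 1 ≤ n) (hm : 2 ≤ m) :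
    ∃ D : MvPolynomial (Fin (n+1) × {μ : Fin (n+1) →₀ ℕ // (μ.sum fun _ e => e) = m}) ℂ,
      D ≠ 0 ∧
      ∀ p : Fin (n+1) → MvPolynomial (Fin (n+1)) ℂ,
        (∀ k, (p k).IsHomogeneous m) →
        MvPolynomial.eval (fun q => MvPolynomial.coeff q.2.1 (p q.1)) D ≠ 0 →
        ∃ v : Fin (∑ i ∈ Finset.range (n+1), m ^ i) → Fin (n+1) → ℂ,
          (∀ i, v i ≠ 0) ∧
          (∀ i j, i ≠ j → ∀ lam : ℂ, v i ≠ lam • v j) ∧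
          (∀ i, ∃ lam : ℂ, (fun k => MvPolynomial.eval (v i) (p k)) = lam • v i) ∧
          (∀ w : Fin (n+1) → ℂ, w ≠ 0 →
            (∃ lam : ℂ, (fun k => MvPolynomial.eval w (p k)) = lam • w) →
            ∃ i, ∃ mu : ℂ, w = mu • v i) := by
  have hmℂ : (m : ℂ) ≠ 1 := by exact_mod_cast (show m ≠ 1 by omega)
  obtain ⟨D, hD₀, hD⟩ := statement8_general (ι := Fin (n+1)) hm hmℂ
  refine ⟨D, hD₀, fun p hp hDp => ?_⟩
  obtain ⟨h_fin, h_card⟩ := hD p hp hDp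
  exact exists_enumeration_eigenlines hp h_fin (by rwa [Fintype.card_fin] at h_card)
end
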